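/- Let e ≥ 2, r ≥ 1, let B be a base tuple, let L ∈ M(r,e), let i ∈ {1,…,e−1} and let k > 0. Then there exist m ≥ 0, residues i_1,…,i_m ∈ ℤ/e and integers k_1,…,k_m > 0 such that, in the free ℤ[v,v^{−1}]-module with basis the set of all r-multipartitions for the multicharge of Pt(B,L) (note that Pt(B,M) has the same multicharge as Pt(B,L) for every M with L →(i,k) M), F^{(k_m)}_{i_m} ⋯ F^{(k_1)}_{i_1} [Pt(B,L)] = Σ_{L →(i,k) M} v^{N_i(L,M)} [Pt(B,M)]. -/

import Mathlib

open scoped Classical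

namespace AK
noncomputable section



/-! ### Matrices, order from base tuple, abacus β-sets -/

/-- The order ≺ on columns determined by a base tuple `B`. -/
def prec {e : ℕ} (B : Fin e → ℕ) (i j : Fin e) : Prop :=
  B i < B j ∨ (B i = B j ∧ i < j)

/-- `rank B i = π(B)⁻¹(i)`, the number of columns ≺-smaller than `i`. -/
def rank {e : ℕ} (B : Fin e → ℕ) (i : Fin e) : Fin e :=
  ⟨(Finset.univ.filter (fun j => prec B j i)).card, by
    have h1 : (Finset.univ.filter (fun j => prec B j i)) ⊆ Finset.univ.erase i := by
      intro j hj
      rw [Finset.mem_filter] at hj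
      refine Finset.mem_erase.mpr ⟨?_, Finset.mem_univ j⟩
      rintro rfl
      rcases hj.2 with h | ⟨-, h⟩ <;> exact lt_irrefl _ h
    have h2 := Finset.card_le_card h1
    have h3 : (Finset.univ.erase i).card < Finset.univ.card :=
      Finset.card_erase_lt_of_mem (Finset.mem_univ i)
    simpa using lt_of_le_of_lt h2 h3⟩

/-- The number of beads on runner `i` of the abacus of component `s` of `Pt(B,M)`. -/
def beads {e r : ℕ} (B : Fin e → ℕ) (M : Fin r → Fin e → Bool) (s : Fin r) (i : Fin e) : ℕ :=
  B i + (if M s (rank B i) then 1 else 0)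

/-- The canonical β-set of component `s` of `Pt(B,M)`. -/
def Tset {e r : ℕ} (B : Fin e → ℕ) (M : Fin r → Fin e → Bool) (s : Fin r) : Set ℤ :=
  {z | z < 0 ∨ (0 ≤ z ∧ ∃ h : z.toNat % e < e, z.toNat / e < beads B M s ⟨z.toNat % e, h⟩)}

/-- `n_s`, the total number of beads of component `s`. -/
def nsum {e r : ℕ} (B : Fin e → ℕ) (M : Fin r → Fin e → Bool) (s : Fin r) : ℕ :=
  ∑ i : Fin e, beads B M s i

/-- Decreasing enumeration of a set of integers: `tEnum T x` is `t_{x+1}`. -/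
noncomputable def tEnum (T : Set ℤ) : ℕ → ℤ
  | 0 => sSup T
  | (x + 1) => sSup (T ∩ Set.Iio (tEnum T x))

/-- The multipartition `Pt(B,M)`: component `s`, part `p+1` (0-indexed parts). -/
noncomputable def PtPart {e r : ℕ} (B : Fin e → ℕ) (M : Fin r → Fin e → Bool)
    (s : Fin r) (p : ℕ) : ℕ :=
  (tEnum (Tset B M s) p + (p + 1) - (nsum B M s : ℤ)).toNat

/-- The multicharge of `Pt(B,M)`. -/
noncomputable def PtCharge {e r : ℕ} (B : Fin e → ℕ) (M : Fin r → Fin e → Bool)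
    (s : Fin r) : ZMod e :=
  (nsum B M s : ZMod e)

/-! ### Nodes, good nodes and Kleshchev multipartitions -/

/-- A node `(s, x, y)` (all 0-indexed). -/
abbrev Node (r : ℕ) := Fin r × ℕ × ℕ

/-- `A` is above `B`. -/
def NodeAbove {r : ℕ} (A B : Node r) : Prop :=
  A.1 < B.1 ∨ (A.1 = B.1 ∧ A.2.1 < B.2.1)

/-- The residue of a node. -/
def res {e r : ℕ} (a : Fin r → ZMod e) (A : Node r) : ZMod e :=
  a A.1 - (A.2.1 : ZMod e) + (A.2.2 : ZMod e)

/-- `A` is a removable node of `lam`. -/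
def Removable {r : ℕ} (lam : Fin r → ℕ → ℕ) (A : Node r) : Prop :=
  A.2.2 + 1 = lam A.1 A.2.1 ∧ lam A.1 (A.2.1 + 1) < lam A.1 A.2.1

/-- `A` is an addable node of `lam`. -/
def Addable {r : ℕ} (lam : Fin r → ℕ → ℕ) (A : Node r) : Prop :=
  A.2.2 = lam A.1 A.2.1 ∧ (A.2.1 = 0 ∨ lam A.1 A.2.1 < lam A.1 (A.2.1 - 1))

/-- `A` is a normal node of `lam`. -/
def Normal {e r : ℕ} (a : Fin r → ZMod e) (lam : Fin r → ℕ → ℕ) (A : Node r) : Prop :=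
  Removable lam A ∧
    ∀ B : Node r, Addable lam B → res a B = res a A → NodeAbove A B →
      Set.ncard {C : Node r | Addable lam C ∧ res a C = res a A ∧ NodeAbove A C ∧ NodeAbove C B}
        < Set.ncard {C : Node r | Removable lam C ∧ res a C = res a A ∧ NodeAbove A C ∧ NodeAbove C B}

/-- `A` is a good node of `lam`: normal, and highest among normal nodes of its residue. -/
def Good {e r : ℕ} (a : Fin r → ZMod e) (lam : Fin r → ℕ → ℕ) (A : Node r) : Prop :=
  Normal a lam A ∧ ∀ B : Node r, Normal a lam B → res a B = res a A → B ≠ A → NodeAbove A B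

/-- Remove the node `A` from `lam`. -/
def removeNode {r : ℕ} (lam : Fin r → ℕ → ℕ) (A : Node r) : Fin r → ℕ → ℕ :=
  fun s x => if s = A.1 ∧ x = A.2.1 then lam s x - 1 else lam s x

/-- Kleshchev multipartitions (for the multicharge `a`). -/
inductive IsKleshchev {e r : ℕ} (a : Fin r → ZMod e) : (Fin r → ℕ → ℕ) → Prop
  | empty : IsKleshchev a (fun _ _ => 0)
  | step (lam : Fin r → ℕ → ℕ) (A : Node r) (hA : Good a lam A)
      (h : IsKleshchev a (removeNode lam A)) : IsKleshchev a lam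

/-! ### Weights and bead swaps -/

/-- `δ₊^M(t,s)`. -/
def deltaP {e r : ℕ} (M : Fin r → Fin e → Bool) (t s : Fin r) : ℕ :=
  (Finset.univ.filter (fun i => M t i = true ∧ M s i = false)).card

/-- `wt^M(t,s)`. -/
def wtPair {e r : ℕ} (M : Fin r → Fin e → Bool) (t s : Fin r) : ℕ :=
  min (deltaP M t s) (deltaP M s t)

/-- `wt(M)`. -/
def wtM {e r : ℕ} (M : Fin r → Fin e → Bool) : ℕ :=
  ∑ t : Fin r, ∑ s ∈ Finset.univ.filter (· < t), wtPair M t s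

/-- `M'` is obtained from `M` by a bead swap. -/
def BeadSwap {e r : ℕ} (M M' : Fin r → Fin e → Bool) : Prop :=
  ∃ i j : Fin e, i ≠ j ∧ ∃ s t : Fin r, s ≠ t ∧
    M s i = true ∧ M t j = true ∧ M s j = false ∧ M t i = false ∧
    M' s i = false ∧ M' t j = false ∧ M' s j = true ∧ M' t i = true ∧
    (∀ s' i', (s' ≠ s ∧ s' ≠ t) ∨ (i' ≠ i ∧ i' ≠ j) → M' s' i' = M s' i')


/-! ### The operators `G^{(k)}_i` on the free `ℤ[v,v⁻¹]`-module with basis `M(r,e)` -/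

/-- The column `i - 1`. -/
def colPred {e : ℕ} (i : Fin e) : Fin e :=
  ⟨i.1 - 1, Nat.lt_of_le_of_lt (Nat.sub_le _ _) i.isLt⟩

/-- `L →(i,k) M`: move `k` ones from column `i-1` to column `i`. -/
def GArrow {e r : ℕ} (i : Fin e) (k : ℕ) (L M : Fin r → Fin e → Bool) : Prop :=
  ∃ S : Finset (Fin r), S.card = k ∧
    (∀ s ∈ S, L s (colPred i) = true ∧ L s i = false) ∧
    M = fun s c => if s ∈ S ∧ (c = colPred i ∨ c = i) then !(L s c) else L s c

/-- `N_i(L,M)` for `L →(i,k) M`. -/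
def Nval {e r : ℕ} (i : Fin e) (L M : Fin r → Fin e → Bool) : ℤ :=
  ∑ a ∈ Finset.univ.filter (fun a : Fin r => ¬(L a i = M a i)),
    (((Finset.univ.filter
        (fun s : Fin r => a < s ∧ M s (colPred i) = true ∧ M s i = false)).card : ℤ)
      - ((Finset.univ.filter
        (fun s : Fin r => a < s ∧ L s (colPred i) = false ∧ L s i = true)).card : ℤ))

/-- The free `ℤ[v,v⁻¹]`-module on the set of `r × e` matrices. -/
abbrev FM (r e : ℕ) := (Fin r → Fin e → Bool) →₀ LaurentPolynomial ℤ

/-- The operator `G^{(k)}_i`. -/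
def Gop {e r : ℕ} (i : Fin e) (k : ℕ) (f : FM r e) : FM r e :=
  f.sum fun L c =>
    ∑ M ∈ Finset.univ.filter (fun M => GArrow i k L M),
      Finsupp.single M (c * LaurentPolynomial.T (Nval i L M))

/-- `G^{(k_m)}_{i_m} ⋯ G^{(k_1)}_{i_1}`, applied in order of the list. -/
def GopList {e r : ℕ} (ops : List (Fin e × ℕ)) (f : FM r e) : FM r e :=
  ops.foldl (fun g p => Gop p.1 p.2 g) f

/-- Membership in `ℕ[v, v⁻¹]` (nonnegative Laurent polynomials). -/
def IsNNLaurent (a : LaurentPolynomial ℤ) : Prop :=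
  ∃ f : ℤ →₀ ℕ, a = f.sum fun n c => (c : LaurentPolynomial ℤ) * LaurentPolynomial.T n

/-- Membership in `v·ℕ[v]`. -/
def IsVNPoly (a : LaurentPolynomial ℤ) : Prop :=
  ∃ f : ℤ →₀ ℕ, (∀ n ∈ f.support, 1 ≤ n) ∧
    a = f.sum fun n c => (c : LaurentPolynomial ℤ) * LaurentPolynomial.T n

/-! ### The operators `F^{(k)}_i` on the free `ℤ[v,v⁻¹]`-module on multipartitions -/

/-- Multipartitions as raw part functions. -/
abbrev MP (r : ℕ) := Fin r → ℕ → ℕ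

/-- `f` is a genuine partition. -/
def IsPartFun (f : ℕ → ℕ) : Prop :=
  Antitone f ∧ ∃ N, ∀ n, N ≤ n → f n = 0

/-- A node belongs to the Young diagram of `lam`. -/
def diagMem {r : ℕ} (lam : MP r) (A : Node r) : Prop :=
  A.2.2 < lam A.1 A.2.1

/-- `σ →(i,k) λ`: `λ` is obtained from `σ` by adding `k` nodes of residue `i`. -/
def AddK {e r : ℕ} (a : Fin r → ZMod e) (i : ZMod e) (k : ℕ) (sig lam : MP r) : Prop :=
  (∀ s, IsPartFun (lam s)) ∧ (∀ s x, sig s x ≤ lam s x) ∧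
  Set.ncard {A : Node r | diagMem lam A ∧ ¬ diagMem sig A} = k ∧
  (∀ A : Node r, diagMem lam A → ¬ diagMem sig A → res a A = i)

/-- `N_i(σ,λ)`. -/
def NvalF {e r : ℕ} (a : Fin r → ZMod e) (i : ZMod e) (sig lam : MP r) : ℤ :=
  ∑ᶠ A ∈ {A : Node r | diagMem lam A ∧ ¬ diagMem sig A},
    ((Set.ncard {C : Node r | Addable lam C ∧ res a C = i ∧ NodeAbove A C} : ℤ)
      - (Set.ncard {C : Node r | Removable sig C ∧ res a C = i ∧ NodeAbove A C} : ℤ))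

/-- The free `ℤ[v,v⁻¹]`-module on multipartitions. -/
abbrev FMP (r : ℕ) := MP r →₀ LaurentPolynomial ℤ

/-- The divided power `F^{(k)}_i`. -/
def Fop {e r : ℕ} (a : Fin r → ZMod e) (i : ZMod e) (k : ℕ) (f : FMP r) : FMP r :=
  f.sum fun sig c =>
    ∑ᶠ lam ∈ {lam : MP r | AddK a i k sig lam},
      Finsupp.single lam (c * LaurentPolynomial.T (NvalF a i sig lam))

/-- `F^{(k_m)}_{i_m} ⋯ F^{(k_1)}_{i_1}`, applied in order of the list. -/
def FopList {e r : ℕ} (a : Fin r → ZMod e) (ops : List (ZMod e × ℕ)) (f : FMP r) : FMP r :=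
  ops.foldl (fun g p => Fop a p.1 p.2 g) f

/-!
Encode each component of a multipartition by the positions of its beads on the integer line. In
every `Pt(B, M)` each runner of the `e`-abacus is filled up to a fixed last slot, whose occupation
is an entry of `M`, and the columns `i - 1` and `i` of `M` belong to slots `P < Q` with no slot
between them. Hence a step `L →(i,k) M` moves, in `k` components, a bead from `P` to `Q`. The same
result is obtained by moving a bead from `z - 1` to `z` exactly once for every `z ∈ (P, Q]`, that
is, by adding nodes, one residue class of `z` after the other.

A suitable order of the residues makes all these moves legal as soon as `P` is occupied and `Q` is
free. As no residue is repeated, a multipartition reached determines the path to it, so its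
coefficient is a single power of `v`, whose exponent telescopes. Conversely, an additive weight on
positions changes by a prescribed amount along every path: the weight measuring how far a position
lies beyond the slot of its runner shows that everything reached is some `Pt(B, M)`, and the
indicator functions of the sets of columns `≥ c` then force `L →(i,k) M`.
-/

/-! ### Divided powers along sequences of distinct residues -/

section Operators

variable {e r : ℕ} {a : Fin r → ZMod e} {j : ZMod e} {k : ℕ} {σ μ lam : MP r} {d : ℤ}
  {ops : List (ZMod e × ℕ)}

/-- A genuine multipartition: every component is a partition. -/
def IsMPart (lam : MP r) : Prop := ∀ s, IsPartFun (lam s)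

lemma IsMPart.exists_eq_zero (h : IsMPart σ) : ∃ N, ∀ s x, N ≤ x → σ s x = 0 := by
  choose N hN using fun s => (h s).2
  exact ⟨Finset.univ.sup N, fun s x hx =>
    hN s x ((Finset.le_sup (f := N) (Finset.mem_univ s)).trans hx)⟩

lemma eq_of_diagMem_iff (h : ∀ A : Node r, diagMem lam A ↔ diagMem μ A) : lam = μ := by
  funext s x
  exact eq_of_forall_lt_iff fun y => h (s, x, y)

lemma AddK.diagMem_mono (h : AddK a j k σ lam) {A : Node r} (hA : diagMem σ A) : diagMem lam A :=
  hA.trans_le (h.2.1 _ _)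

lemma AddK.le_succ [Nontrivial (ZMod e)] (h : AddK a j k σ lam) (s : Fin r) (x : ℕ) :
    lam s x ≤ σ s x + 1 := by
  by_contra! hlt
  have h₀ := h.2.2.2 (s, x, σ s x) (by simp only [diagMem]; omega) (by simp [diagMem])
  have h₁ := h.2.2.2 (s, x, σ s x + 1) (by simp only [diagMem]; omega) (by simp [diagMem])
  refine one_ne_zero (α := ZMod e) ?_
  simp only [res, Nat.cast_succ] at h₀ h₁
  linear_combination h₁ - h₀

lemma AddK.succ_row_eq_zero [Nontrivial (ZMod e)] (h : AddK a j k σ lam) {s : Fin r} {x : ℕ}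
    (h₀ : σ s x = 0) (h₁ : σ s (x + 1) = 0) : lam s (x + 1) = 0 := by
  by_contra hpos
  have hanti : lam s (x + 1) ≤ lam s x := (h.1 s).1 x.le_succ
  have hr₀ := h.2.2.2 (s, x, 0) (by simp only [diagMem]; omega) (by simp [diagMem, h₀])
  have hr₁ := h.2.2.2 (s, x + 1, 0) (by simp only [diagMem]; omega) (by simp [diagMem, h₁])
  refine one_ne_zero (α := ZMod e) ?_
  simp only [res, Nat.cast_succ] at hr₀ hr₁
  linear_combination hr₀ - hr₁

lemma IsMPart.finite_setOf_addK [Nontrivial (ZMod e)] (h : IsMPart σ) :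
    {lam : MP r | AddK a j k σ lam}.Finite := by
  obtain ⟨N, hN⟩ := h.exists_eq_zero
  refine (((Finset.univ ×ˢ Finset.range (N + 1)).powerset.finite_toSet).image
    fun (D : Finset (Fin r × ℕ)) s x => σ s x + if (s, x) ∈ D then 1 else 0).subset ?_
  intro lam hlam
  refine ⟨(Finset.univ ×ˢ Finset.range (N + 1)).filter fun p => lam p.1 p.2 = σ p.1 p.2 + 1,
    Finset.mem_coe.2 (Finset.mem_powerset.2 (Finset.filter_subset _ _)), ?_⟩
  funext s x
  have hle := AddK.le_succ hlam s x
  have hge := hlam.2.1 s x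
  rcases Nat.lt_or_ge x (N + 1) with hx | hx
  · simp only [Finset.mem_filter, Finset.mem_product, Finset.mem_univ, Finset.mem_range, hx,
      true_and]
    split_ifs <;> omega
  · obtain ⟨y, rfl⟩ := Nat.exists_eq_add_of_le' (Nat.one_le_of_lt hx)
    have hσ := hN s (y + 1) (by omega)
    simp [hσ, AddK.succ_row_eq_zero hlam (hN s y (by omega)) hσ, hx.not_gt]

lemma Fop_apply [Nontrivial (ZMod e)] {f : FMP r} (hf : ∀ σ ∈ f.support, IsMPart σ) (lam : MP r) :
    Fop a j k f lam = ∑ σ ∈ f.support, if AddK a j k σ lam then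
      f σ * LaurentPolynomial.T (NvalF a j σ lam) else 0 := by
  rw [Fop, Finsupp.sum, Finsupp.finsetSum_apply]
  refine Finset.sum_congr rfl fun σ hσ => ?_
  rw [finsum_mem_eq_finite_toFinset_sum _ (hf σ hσ).finite_setOf_addK, Finsupp.finsetSum_apply]
  simp [Finsupp.single_apply]

lemma FopList_append_singleton (p : ZMod e × ℕ) (f : FMP r) :
    FopList a (ops ++ [p]) f = Fop a p.1 p.2 (FopList a ops f) := by
  simp [FopList]

variable (a σ) in
/-- `AddPath a σ ops lam d`: starting from `σ` one can add `q.2` nodes of residue `q.1` for each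
`q` in `ops` successively so as to reach `lam`, the exponents `NvalF` of the steps summing to
`d`. -/
inductive AddPath : List (ZMod e × ℕ) → MP r → ℤ → Prop
  | nil : AddPath [] σ 0
  | snoc {ops : List (ZMod e × ℕ)} {μ lam : MP r} {d : ℤ} {q : ZMod e × ℕ}
      (h : AddPath ops μ d) (hq : AddK a q.1 q.2 μ lam) :
      AddPath (ops ++ [q]) lam (d + NvalF a q.1 μ lam)

namespace AddPath

lemma isMPart (h : AddPath a σ ops lam d) (hσ : IsMPart σ) : IsMPart lam := by
  cases h with
  | nil => exact hσ
  | snoc h hq => exact hq.1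

lemma diagMem_mono (h : AddPath a σ ops lam d) {A : Node r} (hA : diagMem σ A) :
    diagMem lam A := by
  induction h with
  | nil => exact hA
  | snoc _ hq ih => exact hq.diagMem_mono ih

lemma res_mem (h : AddPath a σ ops lam d) {A : Node r} (hA : diagMem lam A)
    (hσ : ¬diagMem σ A) : res a A ∈ ops.map Prod.fst := by
  induction h with
  | nil => exact absurd hA hσ
  | @snoc ops μ lam _ q _ hq ih =>
    by_cases hμ : diagMem μ A
    · simpa using Or.inl (by simpa using ih hμ)
    · simp [hq.2.2.2 A hA hμ]

lemma diagMem_iff_of_addK (h : AddPath a σ ops μ d) (hj : j ∉ ops.map Prod.fst)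
    (hA : AddK a j k μ lam) (A : Node r) :
    diagMem μ A ↔ diagMem lam A ∧ (diagMem σ A ∨ res a A ≠ j) := by
  constructor
  · refine fun hμ => ⟨hA.diagMem_mono hμ, or_iff_not_imp_left.2 fun hσ hres => hj ?_⟩
    exact hres ▸ h.res_mem hμ hσ
  · rintro ⟨hlam, hσ | hres⟩
    · exact h.diagMem_mono hσ
    · by_contra hμ
      exact hres (hA.2.2.2 A hlam hμ)

end AddPath

lemma exists_addPath_of_mem_support [Nontrivial (ZMod e)] (hσ : IsMPart σ)
    (hlam : lam ∈ (FopList a ops (Finsupp.single σ 1)).support) :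
    ∃ d, AddPath a σ ops lam d := by
  induction ops using List.reverseRecOn generalizing lam with
  | nil =>
    obtain rfl := Finset.mem_singleton.1 (Finsupp.support_single_subset hlam)
    exact ⟨0, .nil⟩
  | append_singleton ops q ih =>
    have hpart : ∀ μ ∈ (FopList a ops (Finsupp.single σ 1)).support, IsMPart μ := fun μ hμ =>
      (ih hμ).elim fun _ h => h.isMPart hσ
    rw [FopList_append_singleton, Finsupp.mem_support_iff, Fop_apply hpart] at hlam
    obtain ⟨μ, hμ, hne⟩ := Finset.exists_ne_zero_of_sum_ne_zero hlam
    obtain ⟨d, hd⟩ := ih hμ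
    exact ⟨_, hd.snoc (ite_ne_right_iff.1 hne).1⟩

lemma AddPath.FopList_apply [Nontrivial (ZMod e)] (hσ : IsMPart σ) (h : AddPath a σ ops lam d)
    (hops : (ops.map Prod.fst).Nodup) :
    FopList a ops (Finsupp.single σ 1) lam = LaurentPolynomial.T d := by
  induction h with
  | nil => simp [FopList]
  | @snoc ops μ lam d q h hq ih =>
    obtain ⟨hnodup, -, hdisj⟩ := List.nodup_append'.1 (List.map_append ▸ hops)
    have hq' : q.1 ∉ ops.map Prod.fst := fun hmem => hdisj hmem (by simp)
    have hpath {ν : MP r} (hν : ν ∈ (FopList a ops (Finsupp.single σ 1)).support) :=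
      exists_addPath_of_mem_support hσ hν
    rw [FopList_append_singleton,
      Fop_apply fun ν hν => (hpath hν).elim fun _ hd => hd.isMPart hσ, Finset.sum_eq_single μ,
      if_pos hq, ih hnodup, ← LaurentPolynomial.T_add]
    · intro ν hν hne
      refine if_neg fun hA => hne (eq_of_diagMem_iff fun A => ?_)
      obtain ⟨d', hd'⟩ := hpath hν
      rw [hd'.diagMem_iff_of_addK hq' hA, h.diagMem_iff_of_addK hq' hq]
    · intro hμ
      rw [Finsupp.notMem_support_iff.1 hμ, zero_mul, ite_self]

end Operators

/-! ### β-sets and bead moves -/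

section BetaSets

variable {n n' : ℤ} {f f' : ℕ → ℕ} {Z : Set ℤ}

/-- The β-numbers of the partition `f` with charge `n`, in decreasing order. -/
def betaSeq (n : ℤ) (f : ℕ → ℕ) (x : ℕ) : ℤ := f x + n - x - 1

/-- The β-set of the partition `f` with charge `n`: the positions of the beads on its abacus. -/
def betaSet (n : ℤ) (f : ℕ → ℕ) : Set ℤ := Set.range (betaSeq n f)

lemma betaSeq_mem_betaSet (x : ℕ) : betaSeq n f x ∈ betaSet n f := ⟨x, rfl⟩

lemma betaSeq_strictAnti (hf : IsPartFun f) : StrictAnti (betaSeq n f) :=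
  strictAnti_nat_of_succ_lt fun x => by
    have := hf.1 (Nat.le_add_right x 1)
    simp only [betaSeq, Nat.cast_succ]
    omega

lemma eq_of_betaSet_eq (hf : IsPartFun f) (hf' : IsPartFun f')
    (h : betaSet n f = betaSet n' f') : n = n' ∧ f = f' := by
  have hseq : betaSeq n f = betaSeq n' f' :=
    (StrictMono.range_inj (γ := ℤᵒᵈ) (betaSeq_strictAnti hf) (betaSeq_strictAnti hf')).1 h
  simp only [funext_iff, betaSeq] at hseq
  obtain ⟨N, hN⟩ := hf.2
  obtain ⟨N', hN'⟩ := hf'.2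
  have hn := hseq (max N N')
  rw [hN _ (le_max_left _ _), hN' _ (le_max_right _ _)] at hn
  exact ⟨by omega, funext fun x => by have := hseq x; omega⟩

lemma addable_row_iff (hf : IsPartFun f) (x : ℕ) :
    (x = 0 ∨ f x < f (x - 1)) ↔ betaSeq n f x + 1 ∉ betaSet n f := by
  constructor
  · rintro hx ⟨y, hy⟩
    have hyx : y < x := (betaSeq_strictAnti hf).lt_iff_gt.1 (by rw [hy]; exact lt_add_one _)
    have hle := hf.1 (Nat.le_sub_one_of_lt hyx)
    simp only [betaSeq] at hy
    omega
  · contrapose!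
    rintro ⟨hx, hle⟩
    refine ⟨x - 1, ?_⟩
    have := hf.1 (Nat.sub_le x 1)
    simp only [betaSeq]
    omega

lemma removable_row_iff (hf : IsPartFun f) (x : ℕ) :
    f (x + 1) < f x ↔ betaSeq n f x - 1 ∉ betaSet n f := by
  constructor
  · rintro hx ⟨y, hy⟩
    have hxy : x < y := (betaSeq_strictAnti hf).lt_iff_gt.1 (by rw [hy]; exact sub_one_lt _)
    have hle := hf.1 (show x + 1 ≤ y from hxy)
    simp only [betaSeq] at hy
    omega
  · contrapose!
    intro hle
    refine ⟨x + 1, ?_⟩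
    have := hf.1 (Nat.le_add_right x 1)
    simp only [betaSeq]
    omega

/-- Toggling both `z - 1` and `z` for every `z ∈ A`. When the positions `z - 1` are occupied and
the positions `z` are free, this moves a bead from `z - 1` to `z` for every `z ∈ A`; defining it by
toggling makes successive moves compose without side conditions. -/
def slide (T A : Set ℤ) : Set ℤ := symmDiff T (symmDiff A ((· + 1) ⁻¹' A))

lemma mem_slide {T A : Set ℤ} {z : ℤ} :
    z ∈ slide T A ↔ Xor (z ∈ T) (Xor (z ∈ A) (z + 1 ∈ A)) := Iff.rfl

lemma slide_empty (T : Set ℤ) : slide T ∅ = T := by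
  ext z; simp [mem_slide, Xor]

lemma slide_slide (T A A' : Set ℤ) : slide (slide T A) A' = slide T (symmDiff A A') := by
  rw [slide, slide, slide, symmDiff_assoc, Set.preimage_symmDiff, symmDiff_symmDiff_symmDiff_comm]

lemma mem_slide_iff {T A : Set ℤ} (hA : ∀ z ∈ A, z - 1 ∈ T ∧ z ∉ T) {z : ℤ} :
    z ∈ slide T A ↔ z ∈ A ∨ z ∈ T ∧ z + 1 ∉ A := by
  have h₀ := hA z
  have h₁ := hA (z + 1)
  rw [add_sub_cancel_right] at h₁
  simp only [mem_slide, xor_def]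
  tauto

lemma slide_Ioc (T : Set ℤ) {P Q : ℤ} (h : P < Q) :
    slide T (Set.Ioc P Q) = symmDiff T {P, Q} := by
  ext z
  have hz : Xor (z ∈ Set.Ioc P Q) (z + 1 ∈ Set.Ioc P Q) ↔ z ∈ ({P, Q} : Set ℤ) := by
    simp only [Set.mem_Ioc, xor_def, Set.mem_insert_iff, Set.mem_singleton_iff]
    omega
  rw [mem_slide, hz, Set.mem_symmDiff, xor_def]

/-- The partition whose bead configuration with charge `n` arises from that of `f` by moving a
bead onto each of the positions in `Z`. -/
def addNodes (n : ℤ) (f : ℕ → ℕ) (Z : Set ℤ) (x : ℕ) : ℕ :=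
  f x + if betaSeq n f x + 1 ∈ Z then 1 else 0

lemma betaSeq_addNodes (x : ℕ) :
    betaSeq n (addNodes n f Z) x = betaSeq n f x + if betaSeq n f x + 1 ∈ Z then 1 else 0 := by
  rw [betaSeq, addNodes, Nat.cast_add, Nat.cast_ite, Nat.cast_one, Nat.cast_zero, betaSeq]
  ring

lemma addNodes_succ_of_eq (hZ : ∀ z ∈ Z, z ∉ betaSet n f) {x : ℕ} (hx : f (x + 1) = f x) :
    addNodes n f Z (x + 1) = f x := by
  have hprev : betaSeq n f (x + 1) + 1 = betaSeq n f x := by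
    simp only [betaSeq, hx, Nat.cast_succ]
    ring
  rw [addNodes, hprev, if_neg fun h => hZ _ h (betaSeq_mem_betaSet x), hx, add_zero]

lemma isPartFun_addNodes (hf : IsPartFun f) (hZ : ∀ z ∈ Z, z ∉ betaSet n f) :
    IsPartFun (addNodes n f Z) := by
  constructor
  · refine antitone_nat_of_succ_le fun x => ?_
    rcases (hf.1 (Nat.le_add_right x 1)).lt_or_eq with hlt | heq
    · simp only [addNodes]
      split_ifs <;> omega
    · rw [addNodes_succ_of_eq hZ heq]
      exact Nat.le_add_right _ _
  · obtain ⟨N, hN⟩ := hf.2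
    refine ⟨N + 1, fun x hx => ?_⟩
    obtain ⟨y, rfl⟩ := Nat.exists_eq_add_of_le' (Nat.one_le_of_lt hx)
    rw [addNodes_succ_of_eq hZ (by rw [hN _ (by omega), hN _ (by omega)]), hN _ (by omega)]

lemma betaSet_addNodes (hZ : ∀ z ∈ Z, z - 1 ∈ betaSet n f ∧ z ∉ betaSet n f) :
    betaSet n (addNodes n f Z) = slide (betaSet n f) Z := by
  ext z
  rw [mem_slide_iff hZ]
  constructor
  · rintro ⟨x, rfl⟩
    rw [betaSeq_addNodes]
    split_ifs with hx
    · exact .inl hx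
    · exact .inr ⟨by rw [add_zero]; exact betaSeq_mem_betaSet x, by rwa [add_zero]⟩
  · rintro (hz | ⟨⟨x, rfl⟩, hx⟩)
    · obtain ⟨x, hx⟩ := (hZ z hz).1
      exact ⟨x, by rw [betaSeq_addNodes, hx, sub_add_cancel, if_pos hz, sub_add_cancel]⟩
    · exact ⟨x, by rw [betaSeq_addNodes, if_neg hx, add_zero]⟩

end BetaSets

section Enumeration

variable {T : Set ℤ}

lemma tEnum_zero_mem (hne : T.Nonempty) (hT : BddAbove T) : tEnum T 0 ∈ T :=
  Int.csSup_mem hne hT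

lemma tEnum_succ_mem (hneg : Set.Iio 0 ⊆ T) (hT : BddAbove T) (x : ℕ) :
    tEnum T (x + 1) ∈ T ∩ Set.Iio (tEnum T x) :=
  Int.csSup_mem
    ⟨min (tEnum T x) 0 - 1, hneg (by simp only [Set.mem_Iio]; omega),
      by simp only [Set.mem_Iio]; omega⟩
    (hT.mono Set.inter_subset_left)

lemma tEnum_strictAnti (hneg : Set.Iio 0 ⊆ T) (hT : BddAbove T) : StrictAnti (tEnum T) :=
  strictAnti_nat_of_succ_lt fun x => (tEnum_succ_mem hneg hT x).2

lemma range_tEnum (hneg : Set.Iio 0 ⊆ T) (hT : BddAbove T) : Set.range (tEnum T) = T := by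
  apply Set.Subset.antisymm
  · rintro _ ⟨_ | x, rfl⟩
    · exact tEnum_zero_mem ⟨-1, hneg (by simp)⟩ hT
    · exact (tEnum_succ_mem hneg hT x).1
  · intro z hz
    have hex : ∃ x, tEnum T x ≤ z := by
      by_contra! hlt
      obtain ⟨x, y, hxy, heq⟩ := Set.Finite.exists_lt_map_eq_of_forall_mem
        (t := Set.Ioc z (tEnum T 0))
        (fun x => ⟨hlt x, (tEnum_strictAnti hneg hT).antitone x.zero_le⟩) (Set.finite_Ioc _ _)
      exact (tEnum_strictAnti hneg hT hxy).ne' heq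
    refine ⟨Nat.find hex, (Nat.find_spec hex).antisymm ?_⟩
    rcases hx : Nat.find hex with _ | x
    · exact le_csSup hT hz
    · have hlt : ¬tEnum T x ≤ z := Nat.find_min hex (by omega)
      exact le_csSup (hT.mono Set.inter_subset_left) ⟨hz, not_le.1 hlt⟩

lemma ncard_range_inter_Ioi {t : ℕ → ℤ} (ht : StrictAnti t) (x : ℕ) :
    (Set.range t ∩ Set.Ioi (t x)).ncard = x := by
  have himage : Set.range t ∩ Set.Ioi (t x) = t '' Finset.range x := by
    ext z
    constructor
    · rintro ⟨⟨y, rfl⟩, hy⟩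
      exact ⟨y, by simpa using ht.lt_iff_gt.1 hy, rfl⟩
    · rintro ⟨y, hy, rfl⟩
      exact ⟨⟨y, rfl⟩, ht (by simpa using hy)⟩
  rw [himage, Set.ncard_image_of_injective _ ht.injective, Set.ncard_coe_finset, Finset.card_range]

lemma finite_inter_Ici (hT : BddAbove T) (y : ℤ) : (T ∩ Set.Ici y).Finite :=
  (hT.mono Set.inter_subset_left).finite_of_bddBelow (bddBelow_Ici.mono Set.inter_subset_right)

lemma ncard_inter_Ioi_of_neg (hneg : Set.Iio 0 ⊆ T) (hT : BddAbove T) {z : ℤ} (hz : z < 0) :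
    ((T ∩ Set.Ioi z).ncard : ℤ) = (T ∩ Set.Ici 0).ncard - z - 1 := by
  have hunion : T ∩ Set.Ioi z = (T ∩ Set.Ici 0) ∪ Finset.Ioo z 0 := by
    ext y
    have := @hneg y
    simp only [Set.mem_inter_iff, Set.mem_union, Set.mem_Ioi, Set.mem_Ici, Set.mem_Iio,
      Finset.coe_Ioo, Set.mem_Ioo] at this ⊢
    grind
  rw [hunion, Set.ncard_union_eq _ (finite_inter_Ici hT 0) (Finset.finite_toSet _),
    Set.ncard_coe_finset, Int.card_Ioo]
  · push_cast
    omega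
  · exact Set.disjoint_left.2 fun y hy hy' => by
      simp only [Finset.coe_Ioo, Set.mem_Ioo] at hy'
      exact hy'.2.not_ge hy.2

variable (T) in
/-- The number of non-negative elements of `T`: the charge for which a set of beads containing all
the negative positions is the β-set of a partition. -/
def beadCharge : ℤ := (T ∩ Set.Ici 0).ncard

lemma beadCharge_le_tEnum (hneg : Set.Iio 0 ⊆ T) (hT : BddAbove T) (x : ℕ) :
    beadCharge T ≤ tEnum T x + (x + 1) := by
  have hcard := ncard_range_inter_Ioi (tEnum_strictAnti hneg hT) x
  rw [range_tEnum hneg hT] at hcard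
  rcases lt_or_ge (tEnum T x) 0 with hx | hx
  · have := ncard_inter_Ioi_of_neg hneg hT hx
    rw [beadCharge]
    omega
  · have hsub : T ∩ Set.Ici 0 ⊆ (T ∩ Set.Ioi (tEnum T x)) ∪ Finset.Icc 0 (tEnum T x) := by
      rintro z ⟨hz, hz₀⟩
      rcases lt_or_ge (tEnum T x) z with h | h
      · exact .inl ⟨hz, h⟩
      · exact .inr (Finset.mem_coe.2 (Finset.mem_Icc.2 ⟨hz₀, h⟩))
    have hfin : (T ∩ Set.Ioi (tEnum T x)).Finite :=
      (finite_inter_Ici hT _).subset (Set.inter_subset_inter_right _ Set.Ioi_subset_Ici_self)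
    have hle := (Set.ncard_le_ncard hsub (hfin.union (Finset.finite_toSet _))).trans
      (Set.ncard_union_le _ _)
    rw [hcard, Set.ncard_coe_finset, Int.card_Icc] at hle
    rw [beadCharge]
    omega

lemma tEnum_eq_of_beadCharge_le (hneg : Set.Iio 0 ⊆ T) (hT : BddAbove T) {x : ℕ}
    (hx : beadCharge T ≤ x) : tEnum T x + (x + 1) = beadCharge T := by
  have hcard := ncard_range_inter_Ioi (tEnum_strictAnti hneg hT) x
  rw [range_tEnum hneg hT] at hcard
  rcases lt_or_ge (tEnum T x) 0 with ht | ht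
  · have := ncard_inter_Ioi_of_neg hneg hT ht
    rw [beadCharge]
    omega
  · have hmem : tEnum T x ∈ T := (range_tEnum hneg hT).subset ⟨x, rfl⟩
    have hlt : (T ∩ Set.Ioi (tEnum T x)).ncard < (T ∩ Set.Ici 0).ncard :=
      Set.ncard_lt_ncard ((Set.ssubset_iff_of_subset
        (Set.inter_subset_inter_right _ (Set.Ioi_subset_Ici ht))).2
        ⟨_, ⟨hmem, ht⟩, fun h => lt_irrefl _ (Set.mem_Ioi.1 h.2)⟩) (finite_inter_Ici hT 0)
    rw [beadCharge] at hx
    omega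

lemma isPartFun_tEnum (hneg : Set.Iio 0 ⊆ T) (hT : BddAbove T) :
    IsPartFun fun p => (tEnum T p + (p + 1) - beadCharge T).toNat := by
  refine ⟨antitone_nat_of_succ_le fun x => Int.toNat_le_toNat ?_,
    (beadCharge T).toNat, fun x hx => ?_⟩
  · have := tEnum_strictAnti hneg hT (Nat.lt_add_one x)
    push_cast
    omega
  · simp [tEnum_eq_of_beadCharge_le hneg hT (Int.toNat_le.1 hx)]

lemma betaSet_tEnum (hneg : Set.Iio 0 ⊆ T) (hT : BddAbove T) :
    betaSet (beadCharge T) (fun p => (tEnum T p + (p + 1) - beadCharge T).toNat) = T := by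
  have hseq : betaSeq (beadCharge T) (fun p => (tEnum T p + (p + 1) - beadCharge T).toNat) =
      tEnum T := by
    funext x
    rw [betaSeq, Int.toNat_of_nonneg (sub_nonneg.2 (beadCharge_le_tEnum hneg hT x))]
    ring
  rw [betaSet, hseq, range_tEnum hneg hT]

end Enumeration

/-! ### Slots and flush bead configurations -/

section Slots

variable {e r : ℕ} [NeZero e] {B : Fin e → ℕ} {M : Fin r → Fin e → Bool} {s : Fin r}
  {j l : ZMod e}

/-- The runner of the abacus holding the positions of residue `j`. -/
def runner (j : ZMod e) : Fin e := ⟨j.val, ZMod.val_lt j⟩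

/-- The first position on the runner of residue `j` that is not always occupied in `Pt(B,M)`: the
one whose occupation is prescribed by the matrix `M`. -/
def slot (B : Fin e → ℕ) (j : ZMod e) : ℤ := j.val + B (runner j) * e

/-- The column of the matrices that governs the slot of residue `j`. -/
def column (B : Fin e → ℕ) (j : ZMod e) : Fin e := rank B (runner j)

lemma runner_bijective : Function.Bijective (runner : ZMod e → Fin e) := by
  refine (Fintype.bijective_iff_injective_and_card _).2
    ⟨fun j l h => ZMod.val_injective e (congrArg Fin.val h), ?_⟩
  rw [ZMod.card, Fintype.card_fin]

lemma slot_cast (B : Fin e → ℕ) (j : ZMod e) : ((slot B j : ℤ) : ZMod e) = j := by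
  simp [slot]

lemma slot_injective (B : Fin e → ℕ) : Function.Injective (slot B) :=
  Function.LeftInverse.injective (slot_cast B)

lemma slot_nonneg (B : Fin e → ℕ) (j : ZMod e) : 0 ≤ slot B j := by
  unfold slot; positivity

lemma exists_forall_slot_lt (B : Fin e → ℕ) : ∃ H : ℤ, ∀ j, slot B j < H := by
  obtain ⟨H, hH⟩ := (Set.finite_range (slot B)).bddAbove
  exact ⟨H + 1, fun j => Int.lt_add_one_of_le (hH ⟨j, rfl⟩)⟩

lemma prec_runner_iff : prec B (runner j) (runner l) ↔ slot B j < slot B l := by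
  have hj := ZMod.val_lt j
  have hl := ZMod.val_lt l
  have hlt : runner j < runner l ↔ j.val < l.val := Iff.rfl
  rw [prec, hlt, slot, slot]
  norm_cast
  rcases lt_trichotomy (B (runner j)) (B (runner l)) with h | h | h
  · have := Nat.mul_le_mul_right e (Nat.succ_le_of_lt h)
    rw [Nat.succ_mul] at this
    simp only [h, true_or, true_iff]
    omega
  · simp [h]
  · have := Nat.mul_le_mul_right e (Nat.succ_le_of_lt h)
    rw [Nat.succ_mul] at this
    simp only [h.not_gt, h.ne', false_and, or_self, false_iff]
    omega

lemma column_strictMono_slot (h : slot B j < slot B l) : column B j < column B l := by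
  refine Fin.mk_lt_mk.2 (Finset.card_lt_card ?_)
  refine (Finset.ssubset_iff_of_subset ?_).2 ⟨runner j, ?_, ?_⟩
  · intro c
    obtain ⟨m, rfl⟩ := runner_bijective.2 c
    simpa [prec_runner_iff] using fun hm => hm.trans h
  · simpa [prec_runner_iff] using h
  · simp [prec_runner_iff]

lemma column_lt_column_iff : column B j < column B l ↔ slot B j < slot B l := by
  refine ⟨fun h => ?_, column_strictMono_slot⟩
  by_contra! hle
  rcases hle.eq_or_lt with heq | hlt
  · exact h.ne (congrArg (column B) (slot_injective B heq).symm)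
  · exact h.not_gt (column_strictMono_slot hlt)

lemma column_le_column_iff : column B j ≤ column B l ↔ slot B j ≤ slot B l := by
  rw [← not_lt, column_lt_column_iff, not_lt]

lemma column_bijective (B : Fin e → ℕ) : Function.Bijective (column B) := by
  refine (Fintype.bijective_iff_injective_and_card _).2 ⟨fun j l h => slot_injective B ?_, ?_⟩
  · exact (column_le_column_iff.1 h.le).antisymm (column_le_column_iff.1 h.ge)
  · rw [ZMod.card, Fintype.card_fin]

lemma natCast_mem_Tset (q : ℕ) (i : Fin e) :
    ((q * e + i : ℕ) : ℤ) ∈ Tset B M s ↔ q < beads B M s i := by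
  have hmod : (q * e + i) % e = i := by rw [Nat.mul_add_mod', Nat.mod_eq_of_lt i.2]
  have hdiv : (q * e + i) / e = q := by
    rw [Nat.mul_comm, Nat.mul_add_div (NeZero.pos e), Nat.div_eq_of_lt i.2, add_zero]
  simp only [Tset, Set.mem_ofPred_eq, Int.toNat_natCast, hdiv, hmod, Fin.eta, i.2,
    exists_true_left, Int.natCast_nonneg, true_and, (Int.natCast_nonneg _).not_gt, false_or]

lemma mem_Tset {z : ℤ} :
    z ∈ Tset B M s ↔ z < slot B (z : ZMod e) ∨
      (z = slot B (z : ZMod e) ∧ M s (column B (z : ZMod e)) = true) := by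
  rcases lt_or_ge z 0 with hz | hz
  · exact iff_of_true (.inl hz) (.inl (hz.trans_le (slot_nonneg B _)))
  lift z to ℕ using hz
  obtain ⟨⟨q, i⟩, hz⟩ := (Nat.divModEquiv e).symm.surjective z
  obtain ⟨j, rfl⟩ := runner_bijective.2 i
  obtain rfl : q * e + j.val = z := hz
  have hj : (((q * e + j.val : ℕ) : ℤ) : ZMod e) = j := by simp
  have hlt : ((q * e + j.val : ℕ) : ℤ) < slot B j ↔ q < B (runner j) := by
    rw [slot]
    norm_cast
    rw [add_comm, add_lt_add_iff_left, Nat.mul_lt_mul_right (NeZero.pos e)]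
  have heq : ((q * e + j.val : ℕ) : ℤ) = slot B j ↔ q = B (runner j) := by
    rw [slot]
    norm_cast
    rw [add_comm, add_right_inj, Nat.mul_left_inj (NeZero.ne e)]
  rw [hj, hlt, heq, column]
  refine (natCast_mem_Tset q (runner j)).trans ?_
  rw [beads]
  split_ifs with h
  · simp only [h, and_true]
    omega
  · simp [h]

omit [NeZero e] in
lemma Iio_subset_Tset : Set.Iio 0 ⊆ Tset B M s := fun _ hz => .inl hz

lemma bddAbove_Tset : BddAbove (Tset B M s) := by
  obtain ⟨H, hH⟩ := exists_forall_slot_lt B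
  refine ⟨H, fun z hz => ?_⟩
  have := hH (z : ZMod e)
  rcases mem_Tset.1 hz with h | ⟨h, -⟩ <;> omega

lemma beadCharge_Tset : beadCharge (Tset B M s) = nsum B M s := by
  let pos : (_ : Fin e) × ℕ → ℤ := fun p => ((Nat.divModEquiv e).symm (p.2, p.1) : ℕ)
  have hpos : Function.Injective pos := fun p p' h => by
    have h' := (Nat.divModEquiv e).symm.injective (Nat.cast_injective h)
    exact Sigma.ext (congrArg Prod.snd h') (heq_of_eq (congrArg Prod.fst h'))
  have himage : Tset B M s ∩ Set.Ici 0 =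
      pos '' (Finset.univ.sigma fun i => Finset.range (beads B M s i)) := by
    ext z
    constructor
    · rintro ⟨hz, hz₀⟩
      lift z to ℕ using hz₀
      obtain ⟨⟨q, i⟩, rfl⟩ := (Nat.divModEquiv e).symm.surjective z
      exact ⟨⟨i, q⟩, by simpa using (natCast_mem_Tset q i).1 hz, rfl⟩
    · rintro ⟨⟨i, q⟩, hq, rfl⟩
      exact ⟨(natCast_mem_Tset q i).2 (by simpa using hq), Int.natCast_nonneg _⟩
  rw [beadCharge, himage, Set.ncard_image_of_injective _ hpos, Set.ncard_coe_finset,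
    Finset.card_sigma, nsum]
  simp only [Finset.card_range]

lemma isPartFun_PtPart (B : Fin e → ℕ) (M : Fin r → Fin e → Bool) (s : Fin r) :
    IsPartFun (PtPart B M s) := by
  have h := isPartFun_tEnum (T := Tset B M s) Iio_subset_Tset bddAbove_Tset
  rwa [beadCharge_Tset] at h

lemma betaSet_PtPart (B : Fin e → ℕ) (M : Fin r → Fin e → Bool) (s : Fin r) :
    betaSet (nsum B M s) (PtPart B M s) = Tset B M s := by
  have h := betaSet_tEnum (T := Tset B M s) Iio_subset_Tset bddAbove_Tset
  rwa [beadCharge_Tset] at h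

lemma eq_PtPart_of_betaSet_eq_Tset {n : ℤ} {f : ℕ → ℕ} (hf : IsPartFun f)
    (h : betaSet n f = Tset B M s) : n = nsum B M s ∧ f = PtPart B M s :=
  eq_of_betaSet_eq hf (isPartFun_PtPart B M s) (h.trans (betaSet_PtPart B M s).symm)

variable (B) in
/-- A set of beads all of whose runners are filled up to their slots, the slots themselves being
arbitrary. -/
def IsFlush (U : Set ℤ) : Prop :=
  ∀ z : ℤ, (z < slot B (z : ZMod e) → z ∈ U) ∧ (slot B (z : ZMod e) < z → z ∉ U)

lemma isFlush_Tset : IsFlush B (Tset B M s) := by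
  refine fun z => ⟨fun hz => mem_Tset.2 (.inl hz), fun hz hmem => ?_⟩
  rcases mem_Tset.1 hmem with h | ⟨h, -⟩ <;> omega

lemma slot_mem_Tset : slot B j ∈ Tset B M s ↔ M s (column B j) = true := by
  simp [mem_Tset, slot_cast]

lemma IsFlush.eq_Tset {U : Set ℤ} (hU : IsFlush B U)
    (hM : ∀ j, slot B j ∈ U ↔ M s (column B j) = true) : U = Tset B M s := by
  ext z
  rw [mem_Tset]
  rcases lt_trichotomy z (slot B (z : ZMod e)) with h | h | h
  · exact iff_of_true ((hU z).1 h) (.inl h)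
  · rw [← hM, ← h]
    simp
  · exact iff_of_false ((hU z).2 h) (by rintro (h' | ⟨h', -⟩) <;> omega)

end Slots

/-! ### Adding nodes of one residue -/

section OneStep

variable {e r : ℕ} {n : Fin r → ℤ} {σ lam : MP r} {Z : Fin r → Finset ℤ} {j : ZMod e} {H : ℤ}

/-- The component of a node together with the position to which adding the node moves a bead. -/
def nodePos (n : Fin r → ℤ) (A : Node r) : (_ : Fin r) × ℤ := ⟨A.1, n A.1 - A.2.1 + A.2.2⟩

/-- The order on positions corresponding to `NodeAbove`. -/
def PosAbove (v w : (_ : Fin r) × ℤ) : Prop := v.1 < w.1 ∨ v.1 = w.1 ∧ w.2 < v.2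

lemma res_eq_nodePos (A : Node r) :
    res (fun s => (n s : ZMod e)) A = ((nodePos n A).2 : ZMod e) := by
  simp [res, nodePos]

lemma nodePos_of_eq {A : Node r} (hA : A.2.2 = σ A.1 A.2.1) :
    (nodePos n A).2 = betaSeq (n A.1) (σ A.1) A.2.1 + 1 := by
  rw [nodePos, betaSeq, hA]
  ring

lemma nodePos_of_succ_eq {A : Node r} (hA : A.2.2 + 1 = σ A.1 A.2.1) :
    (nodePos n A).2 = betaSeq (n A.1) (σ A.1) A.2.1 := by
  rw [nodePos, betaSeq, ← hA]
  push_cast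
  ring

lemma injOn_nodePos (hσ : IsMPart σ) (c : ℕ) :
    Set.InjOn (nodePos n) {A : Node r | A.2.2 + c = σ A.1 A.2.1} := by
  rintro ⟨s, x, y⟩ hA ⟨s', x', y'⟩ hA' heq
  obtain rfl : s = s' := congrArg Sigma.fst heq
  simp only [Set.mem_ofPred_eq] at hA hA'
  have hpos : n s - x + y = n s - x' + y' := congrArg Sigma.snd heq
  obtain rfl : x = x' := (betaSeq_strictAnti (n := n s) (hσ s)).injective (by
    simp only [betaSeq, ← hA, ← hA', Nat.cast_add]
    linear_combination hpos)
  obtain rfl : y = y' := by omega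
  rfl

lemma bijOn_nodePos_addable (hlam : IsMPart lam) :
    Set.BijOn (nodePos n) {C | Addable lam C}
      {w | w.2 - 1 ∈ betaSet (n w.1) (lam w.1) ∧ w.2 ∉ betaSet (n w.1) (lam w.1)} := by
  refine ⟨fun C hC => ?_, (injOn_nodePos hlam 0).mono fun C hC => hC.1, ?_⟩
  · simp only [Set.mem_ofPred_eq, nodePos_of_eq hC.1, add_sub_cancel_right]
    exact ⟨betaSeq_mem_betaSet _, (addable_row_iff (hlam C.1) _).1 hC.2⟩
  · rintro ⟨s, z⟩ ⟨⟨x, hx⟩, hz⟩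
    obtain rfl : betaSeq (n s) (lam s) x + 1 = z := by simp only at hx; omega
    exact ⟨(s, x, lam s x), ⟨rfl, (addable_row_iff (hlam s) x).2 hz⟩,
      Sigma.ext rfl (heq_of_eq (nodePos_of_eq rfl))⟩

lemma bijOn_nodePos_removable (hσ : IsMPart σ) :
    Set.BijOn (nodePos n) {C | Removable σ C}
      {w | w.2 ∈ betaSet (n w.1) (σ w.1) ∧ w.2 - 1 ∉ betaSet (n w.1) (σ w.1)} := by
  refine ⟨fun C hC => ?_, (injOn_nodePos hσ 1).mono fun C hC => hC.1, ?_⟩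
  · simp only [Set.mem_ofPred_eq, nodePos_of_succ_eq hC.1]
    exact ⟨betaSeq_mem_betaSet _, (removable_row_iff (hσ C.1) _).1 hC.2⟩
  · rintro ⟨s, z⟩ ⟨⟨x, hx⟩, hz⟩
    obtain rfl : betaSeq (n s) (σ s) x = z := hx
    have hlt := (removable_row_iff (hσ s) x).2 hz
    have hrow : σ s x - 1 + 1 = σ s x := by omega
    exact ⟨(s, x, σ s x - 1), ⟨hrow, hlt⟩, Sigma.ext rfl (heq_of_eq (nodePos_of_succ_eq hrow))⟩

lemma nodeAbove_iff_of_addable (hlam : IsMPart lam) {A C : Node r}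
    (hA : A.2.2 + 1 = lam A.1 A.2.1) (hC : Addable lam C) :
    NodeAbove A C ↔ PosAbove (nodePos n A) (nodePos n C) := by
  refine or_congr Iff.rfl (and_congr_right fun hs => ?_)
  have hfree := (bijOn_nodePos_addable (n := n) hlam).mapsTo hC |>.2
  rw [nodePos_of_succ_eq hA, nodePos_of_eq hC.1] at *
  obtain ⟨s, x, y⟩ := A
  obtain ⟨s', x', y'⟩ := C
  obtain rfl : s = s' := hs
  have hanti := betaSeq_strictAnti (n := n s) (hlam s)
  constructor
  · intro hx
    refine lt_of_le_of_ne (Int.add_one_le_of_lt (hanti hx)) fun h => hfree ?_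
    exact h ▸ betaSeq_mem_betaSet _
  · intro hz
    exact hanti.lt_iff_gt.1 ((Int.lt_succ _).trans hz)

lemma nodeAbove_iff_of_removable [Nontrivial (ZMod e)] (hσ : IsMPart σ) {A C : Node r}
    (hA : A.2.2 = σ A.1 A.2.1) (hC : Removable σ C)
    (hres : ((nodePos n C).2 : ZMod e) = (nodePos n A).2) :
    NodeAbove A C ↔ PosAbove (nodePos n A) (nodePos n C) := by
  refine or_congr Iff.rfl (and_congr_right fun hs => ?_)
  rw [nodePos_of_eq hA, nodePos_of_succ_eq hC.1] at *
  obtain ⟨s, x, y⟩ := A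
  obtain ⟨s', x', y'⟩ := C
  obtain rfl : s = s' := hs
  have hanti := betaSeq_strictAnti (n := n s) (hσ s)
  constructor
  · exact fun hx => (hanti hx).trans (Int.lt_succ _)
  · intro hz
    refine hanti.lt_iff_gt.1 (lt_of_le_of_ne (Int.lt_add_one_iff.1 hz) fun h => ?_)
    simp only at h
    simp [h] at hres

/-- The Iverson bracket. -/
def ind (p : Prop) : ℤ := if p then 1 else 0

/-- `U` contains all the negative positions and no position from `H` on. -/
def Confined (H : ℤ) (U : Set ℤ) : Prop := Set.Iio 0 ⊆ U ∧ U ⊆ Set.Iio H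

/-- The sum of `g` over the positions in the residue class of `z` that come below position `z` of
component `s`, those more than `H` steps away from `z` being left out. -/
def sumBelow (e : ℕ) (H : ℤ) (s : Fin r) (z : ℤ) (g : Fin r → ℤ → ℤ) : ℤ :=
  ∑ s', ∑ t ∈ Finset.Icc (-H) H, if s < s' ∨ s = s' ∧ t < 0 then g s' (z + t * e) else 0

lemma ncard_posAbove [NeZero e] {p : (_ : Fin r) × ℤ → Prop} (hp : ∀ w, p w → w.2 ∈ Set.Icc 0 H)
    (s : Fin r) {z : ℤ} (hz : z ∈ Set.Icc 0 H) :
    (Set.ncard {w | p w ∧ (w.2 : ZMod e) = z ∧ PosAbove ⟨s, z⟩ w} : ℤ) =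
      sumBelow e H s z fun s' y => ind (p ⟨s', y⟩) := by
  have he : (0 : ℤ) < e := by exact_mod_cast NeZero.pos e
  let pos : (_ : Fin r) × ℤ → (_ : Fin r) × ℤ := fun v => ⟨v.1, z + v.2 * e⟩
  have hpos : Function.Injective pos := by
    rintro ⟨s₁, t₁⟩ ⟨s₂, t₂⟩ h
    obtain rfl : s₁ = s₂ := congrArg Sigma.fst h
    have ht : z + t₁ * e = z + t₂ * e := congrArg Sigma.snd h
    rw [mul_right_cancel₀ he.ne' (add_left_cancel ht)]
  have himage : {w | p w ∧ (w.2 : ZMod e) = z ∧ PosAbove ⟨s, z⟩ w} =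
      pos '' ((Finset.univ.sigma fun _ => Finset.Icc (-H) H).filter fun v =>
        (s < v.1 ∨ s = v.1 ∧ v.2 < 0) ∧ p (pos v)) := by
    ext ⟨s', y⟩
    constructor
    · rintro ⟨hy, hres, habove⟩
      obtain ⟨t, ht⟩ := (ZMod.intCast_eq_intCast_iff_dvd_sub _ _ _).1 hres.symm
      obtain rfl : y = z + t * e := by linear_combination ht
      have hyH := hp _ hy
      simp only [Set.mem_Icc] at hyH hz
      refine ⟨⟨s', t⟩, ?_, rfl⟩
      simp only [Finset.coe_filter, Finset.mem_sigma, Finset.mem_univ, Finset.mem_Icc, true_and,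
        Set.mem_ofPred_eq]
      refine ⟨⟨by nlinarith, by nlinarith⟩, habove.imp_right fun h => ⟨h.1, ?_⟩, hy⟩
      have := h.2
      simp only at this
      nlinarith
    · rintro ⟨⟨s'', t⟩, ht, heq⟩
      simp only [Finset.coe_filter, Finset.mem_sigma, Finset.mem_univ, Finset.mem_Icc, true_and,
        Set.mem_ofPred_eq] at ht
      rw [← heq]
      refine ⟨ht.2.2, by simp [pos], ht.2.1.imp_right fun h => ⟨h.1, ?_⟩⟩
      simp only [pos]
      nlinarith [h.2]
  rw [himage, Set.ncard_image_of_injective _ hpos, Set.ncard_coe_finset, Finset.card_filter,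
    Finset.sum_sigma, sumBelow]
  push_cast
  simp only [ite_and, ind, pos]

lemma ncard_nodeAbove [NeZero e] {P : Node r → Prop} {p : (_ : Fin r) × ℤ → Prop}
    (hbij : Set.BijOn (nodePos n) {C | P C} {w | p w}) (hp : ∀ w, p w → w.2 ∈ Set.Icc 0 H)
    {A : Node r} (hA : (nodePos n A).2 ∈ Set.Icc 0 H)
    (hres : ((nodePos n A).2 : ZMod e) = j)
    (habove : ∀ C, P C → ((nodePos n C).2 : ZMod e) = j →
      (NodeAbove A C ↔ PosAbove (nodePos n A) (nodePos n C))) :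
    (Set.ncard {C | P C ∧ res (fun s => (n s : ZMod e)) C = j ∧ NodeAbove A C} : ℤ) =
      sumBelow e H A.1 (nodePos n A).2 fun s y => ind (p ⟨s, y⟩) := by
  have hinj : Set.InjOn (nodePos n)
      {C | P C ∧ res (fun s => (n s : ZMod e)) C = j ∧ NodeAbove A C} :=
    hbij.injOn.mono fun C hC => hC.1
  rw [← ncard_posAbove hp A.1 hA, ← hinj.ncard_image]
  congr 2
  ext w
  constructor
  · rintro ⟨C, ⟨hC, hj, hAC⟩, rfl⟩
    rw [res_eq_nodePos] at hj
    exact ⟨hbij.mapsTo hC, hj.trans hres.symm, (habove C hC hj).1 hAC⟩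
  · rintro ⟨hw, hj, hAw⟩
    obtain ⟨C, hC, rfl⟩ := hbij.surjOn hw
    rw [hres] at hj
    exact ⟨C, ⟨hC, by rwa [res_eq_nodePos], (habove C hC hj).2 hAw⟩, rfl⟩

lemma sumBelow_sub (s : Fin r) (z : ℤ) (g g' : Fin r → ℤ → ℤ) :
    sumBelow e H s z g - sumBelow e H s z g' = sumBelow e H s z fun s' y => g s' y - g' s' y := by
  simp only [sumBelow, ← Finset.sum_sub_distrib]
  refine Finset.sum_congr rfl fun s' _ => Finset.sum_congr rfl fun t _ => ?_
  split_ifs <;> simp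

lemma sumBelow_congr {s : Fin r} {z : ℤ} {g g' : Fin r → ℤ → ℤ}
    (h : ∀ s' (y : ℤ), (y : ZMod e) = z → g s' y = g' s' y) :
    sumBelow e H s z g = sumBelow e H s z g' := by
  simp only [sumBelow]
  refine Finset.sum_congr rfl fun s' _ => Finset.sum_congr rfl fun t _ => ?_
  rw [h s' _ (by simp)]

/-- The contribution of position `z` to the number of addable nodes after, minus the number of
removable nodes before, the beads of `T` have been moved onto the positions in `A`. -/
def moveWeight (T A : Set ℤ) (z : ℤ) : ℤ :=
  if z ∈ A then 0 else ind (z - 1 ∈ T) - ind (z ∈ T)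

lemma ind_addable_sub_ind_removable {T A : Set ℤ} (hA : ∀ z ∈ A, z - 1 ∈ T ∧ z ∉ T) {z : ℤ}
    (hpred : z - 1 ∉ A) (hsucc : z + 1 ∉ A) :
    ind (z - 1 ∈ slide T A ∧ z ∉ slide T A) - ind (z ∈ T ∧ z - 1 ∉ T) = moveWeight T A z := by
  rw [mem_slide_iff hA, mem_slide_iff hA, sub_add_cancel, moveWeight]
  simp only [ind]
  specialize hA z
  by_cases hz : z ∈ A <;> by_cases h₀ : z ∈ T <;> by_cases h₁ : z - 1 ∈ T <;> simp_all

variable (n σ Z) in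
/-- The multipartition obtained from `σ` by adding, in each component `s`, the nodes that move a
bead onto a position in `Z s`. -/
def addNodesAt : MP r := fun s => addNodes (n s) (σ s) (Z s)

lemma added_addNodesAt_iff {A : Node r} :
    diagMem (addNodesAt n σ Z) A ∧ ¬diagMem σ A ↔
      A.2.2 = σ A.1 A.2.1 ∧ (nodePos n A).2 ∈ Z A.1 := by
  rw [diagMem, diagMem, addNodesAt, addNodes, Finset.mem_coe]
  constructor
  · intro h
    have heq : A.2.2 = σ A.1 A.2.1 := by split_ifs at h <;> omega
    refine ⟨heq, by_contra fun hz => ?_⟩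
    rw [nodePos_of_eq heq] at hz
    rw [if_neg hz] at h
    omega
  · rintro ⟨heq, hz⟩
    rw [nodePos_of_eq heq] at hz
    rw [if_pos hz]
    omega

lemma bijOn_nodePos_added (hσ : IsMPart σ) (hZ : ∀ s, ∀ z ∈ Z s, z - 1 ∈ betaSet (n s) (σ s)) :
    Set.BijOn (nodePos n) {A | diagMem (addNodesAt n σ Z) A ∧ ¬diagMem σ A}
      (Finset.univ.sigma Z : Finset ((_ : Fin r) × ℤ)) := by
  refine ⟨fun A hA => ?_, (injOn_nodePos hσ 0).mono fun A hA => (added_addNodesAt_iff.1 hA).1, ?_⟩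
  · exact Finset.mem_coe.2
      (Finset.mem_sigma.2 ⟨Finset.mem_univ _, (added_addNodesAt_iff.1 hA).2⟩)
  · rintro ⟨s, z⟩ hz
    have hz' : z ∈ Z s := by simpa using hz
    obtain ⟨x, hx⟩ := hZ s z hz'
    have hpos : nodePos n (s, x, σ s x) = ⟨s, z⟩ :=
      Sigma.ext rfl (heq_of_eq ((nodePos_of_eq rfl).trans (by rw [hx, sub_add_cancel])))
    exact ⟨(s, x, σ s x), added_addNodesAt_iff.2 ⟨rfl, by rwa [hpos]⟩, hpos⟩

variable (hσ : IsMPart σ)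
  (hZ : ∀ s, ∀ z ∈ Z s, (z - 1 ∈ betaSet (n s) (σ s) ∧ z ∉ betaSet (n s) (σ s)))
  (hj : ∀ s, ∀ z ∈ Z s, (z : ZMod e) = j)

include hσ hZ

lemma isMPart_addNodesAt : IsMPart (addNodesAt n σ Z) := fun s =>
  isPartFun_addNodes (hσ s) fun z hz => (hZ s z hz).2

include hj

lemma addK_addNodesAt :
    AddK (fun s => (n s : ZMod e)) j (∑ s, (Z s).card) σ (addNodesAt n σ Z) := by
  have hbij := bijOn_nodePos_added hσ fun s z hz => (hZ s z hz).1
  refine ⟨isMPart_addNodesAt hσ hZ, fun s x => Nat.le_add_right _ _, ?_, fun A hA hσA => ?_⟩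
  · rw [← hbij.injOn.ncard_image, hbij.image_eq, Set.ncard_coe_finset,
      Finset.card_sigma]
  · rw [res_eq_nodePos]
    exact hj _ _ (added_addNodesAt_iff.1 ⟨hA, hσA⟩).2

lemma NvalF_addNodesAt [Nontrivial (ZMod e)] [NeZero e]
    (hH : ∀ s, Confined H (betaSet (n s) (σ s)))
    (hH' : ∀ s, Confined H (betaSet (n s) (addNodesAt n σ Z s))) :
    NvalF (fun s => (n s : ZMod e)) j σ (addNodesAt n σ Z) = ∑ s, ∑ z ∈ Z s,
      sumBelow e H s z fun s' => moveWeight (betaSet (n s') (σ s')) (Z s') := by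
  rw [NvalF, finsum_mem_eq_of_bijOn (nodePos n)
    (bijOn_nodePos_added hσ fun s z hz => (hZ s z hz).1)
    (g := fun v => sumBelow e H v.1 v.2 fun s => moveWeight (betaSet (n s) (σ s)) (Z s)),
    finsum_mem_coe_finset, Finset.sum_sigma]
  rintro A hA
  obtain ⟨hA, hz⟩ := added_addNodesAt_iff.1 hA
  have hlam := isMPart_addNodesAt hσ hZ
  have hres := hj _ _ hz
  have hpos : (nodePos n A).2 ∈ Set.Icc 0 H := by
    have h := hZ _ _ hz
    exact ⟨not_lt.1 fun hneg => h.2 ((hH _).1 hneg), by linarith [Set.mem_Iio.1 ((hH _).2 h.1)]⟩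
  have hmove : ∀ s, betaSet (n s) (addNodesAt n σ Z s) = slide (betaSet (n s) (σ s)) (Z s) :=
    fun s => betaSet_addNodes (hZ s)
  rw [ncard_nodeAbove (bijOn_nodePos_addable hlam) ?_ hpos hres ?_,
    ncard_nodeAbove (bijOn_nodePos_removable hσ) ?_ hpos hres ?_, sumBelow_sub]
  · refine sumBelow_congr fun s y hy => ?_
    rw [hmove]
    have hne {y' : ℤ} (hy' : y' ∈ (Z s : Set ℤ)) : (y' : ZMod e) = y :=
      (hj s _ hy').trans (hres.symm.trans hy.symm)
    refine ind_addable_sub_ind_removable (hZ s) (fun h => ?_) (fun h => ?_)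
    · simpa using hne h
    · simpa using hne h
  · rintro ⟨s, y⟩ ⟨h, h'⟩
    have := (hH s).2 h
    have := mt (@(hH s).1 (y - 1)) h'
    simp only [Set.mem_Iio, Set.mem_Icc] at *
    omega
  · exact fun C hC hCj => nodeAbove_iff_of_removable hσ hA hC (hCj.trans hres.symm)
  · rintro ⟨s, y⟩ ⟨h, h'⟩
    have := (hH' s).2 h
    have := mt (@(hH' s).1 y) h'
    simp only [Set.mem_Iio, Set.mem_Icc] at *
    omega
  · refine fun C hC _ => nodeAbove_iff_of_addable hlam ?_ hC
    rw [addNodesAt, addNodes, if_pos (by rwa [← nodePos_of_eq hA]), hA]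

end OneStep

/-! ### Telescoping along an interval between slots -/

section Static

variable {e r : ℕ} [NeZero e] {B : Fin e → ℕ} {T : Set ℤ} {p q : ZMod e} {t : ℤ}

lemma sum_Ioc_sub {a b : ℤ} (hab : a ≤ b) (g : ℤ → ℤ) :
    ∑ z ∈ Finset.Ioc a b, (g (z - 1) - g z) = g a - g b := by
  induction b, hab using Int.leInduction with
  | base => simp
  | succ b hab ih =>
    have hins : insert (b + 1) (Finset.Ioc a b) = Finset.Ioc a (b + 1) :=
      Finset.insert_Ioc_right_eq_Ioc_succ hab
    rw [← hins, Finset.sum_insert (by simp), ih, add_sub_cancel_right]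
    ring

lemma moveWeight_empty (T : Set ℤ) (z : ℤ) : moveWeight T ∅ z = ind (z - 1 ∈ T) - ind (z ∈ T) :=
  if_neg (Set.notMem_empty z)

lemma moveWeight_Ioc_of_le {P Q z : ℤ} (hP : P ∈ T) (hz : z ≤ Q) :
    moveWeight T (Set.Ioc P Q) z =
      ind (z - 1 ∈ T ∪ Set.Ioc P Q) - ind (z ∈ T ∪ Set.Ioc P Q) := by
  rcases lt_trichotomy z (P + 1) with h | rfl | h
  · have h₀ : z ∉ Set.Ioc P Q := fun h' => by have := h'.1; omega
    have h₁ : z - 1 ∉ Set.Ioc P Q := fun h' => by have := h'.1; omega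
    simp [moveWeight, h₀, h₁]
  · have h₀ : P + 1 ∈ Set.Ioc P Q := ⟨lt_add_one P, hz⟩
    simp [moveWeight, h₀, hP, ind]
  · have h₀ : z ∈ Set.Ioc P Q := ⟨by omega, hz⟩
    have h₁ : z - 1 ∈ Set.Ioc P Q := ⟨by omega, by omega⟩
    simp [moveWeight, h₀, h₁, ind]

lemma moveWeight_Ioc_of_lt {P Q z : ℤ} (hQ : Q ∉ T) (hz : P + 1 < z) :
    moveWeight T (Set.Ioc P Q) z =
      ind (z - 1 ∈ T \ Set.Ioc P Q) - ind (z ∈ T \ Set.Ioc P Q) := by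
  rcases lt_trichotomy z (Q + 1) with h | rfl | h
  · have h₀ : z ∈ Set.Ioc P Q := ⟨by omega, by omega⟩
    have h₁ : z - 1 ∈ Set.Ioc P Q := ⟨by omega, by omega⟩
    simp [moveWeight, h₀, h₁, ind]
  · simp [moveWeight, hQ]
  · have h₀ : z ∉ Set.Ioc P Q := fun h' => by have := h'.2; omega
    have h₁ : z - 1 ∉ Set.Ioc P Q := fun h' => by have := h'.2; omega
    simp [moveWeight, h₀, h₁]

lemma IsFlush.slot_add_mul_mem (hT : IsFlush B T) (ht : t < 0) : slot B p + t * e ∈ T := by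
  have he : (0 : ℤ) < e := by exact_mod_cast NeZero.pos e
  refine (hT _).1 ?_
  simp only [Int.cast_add, slot_cast, Int.cast_mul, Int.cast_natCast, CharP.cast_eq_zero, mul_zero,
    add_zero, add_lt_iff_neg_left]
  nlinarith

lemma IsFlush.slot_add_mul_notMem (hT : IsFlush B T) (ht : 0 < t) : slot B p + t * e ∉ T := by
  have he : (0 : ℤ) < e := by exact_mod_cast NeZero.pos e
  refine (hT _).2 ?_
  simp only [Int.cast_add, slot_cast, Int.cast_mul, Int.cast_natCast, CharP.cast_eq_zero, mul_zero,
    add_zero, lt_add_iff_pos_right]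
  nlinarith

lemma sum_moveWeight_empty (hT : IsFlush B T) (hpq : slot B p ≤ slot B q) :
    ∑ z ∈ Finset.Ioc (slot B p) (slot B q), moveWeight T ∅ (z + t * e) =
      if t = 0 then ind (slot B p ∈ T) - ind (slot B q ∈ T) else 0 := by
  have h := sum_Ioc_sub hpq fun z => ind (z + t * e ∈ T)
  simp only [moveWeight_empty, add_sub_right_comm] at h ⊢
  rw [h]
  rcases lt_trichotomy t 0 with ht | rfl | ht
  · simp [ht.ne, hT.slot_add_mul_mem ht]
  · simp
  · simp [ht.ne', hT.slot_add_mul_notMem ht]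

lemma sum_moveWeight_Ioc (hT : IsFlush B T) (hpq : slot B p ≤ slot B q) (hp : slot B p ∈ T)
    (hq : slot B q ∉ T) (t : ℤ) :
    ∑ z ∈ Finset.Ioc (slot B p) (slot B q),
      moveWeight T (Set.Ioc (slot B p) (slot B q)) (z + t * e) = 0 := by
  have he : (0 : ℤ) < e := by exact_mod_cast NeZero.pos e
  set I := Set.Ioc (slot B p) (slot B q)
  rcases lt_trichotomy t 0 with ht | rfl | ht
  · have h := sum_Ioc_sub hpq fun z => ind (z + t * e ∈ T ∪ I)
    simp only [Set.mem_union, hT.slot_add_mul_mem ht, true_or, sub_self] at h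
    rw [← h]
    refine Finset.sum_congr rfl fun z hz => ?_
    have hle := (Finset.mem_Ioc.1 hz).2
    rw [moveWeight_Ioc_of_le hp (by nlinarith), add_sub_right_comm]
    rfl
  · refine Finset.sum_eq_zero fun z hz => if_pos ?_
    rw [zero_mul, add_zero]
    exact Finset.mem_Ioc.1 hz
  · have h := sum_Ioc_sub hpq fun z => ind (z + t * e ∈ T \ I)
    simp only [Set.mem_sdiff, hT.slot_add_mul_notMem ht, false_and, sub_self] at h
    rw [← h]
    refine Finset.sum_congr rfl fun z hz => ?_
    have hlt := (Finset.mem_Ioc.1 hz).1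
    rw [moveWeight_Ioc_of_lt hq (by nlinarith), add_sub_right_comm]
    rfl

variable (B p q) in
/-- The positions onto which beads are moved in order to bring, in each component in `S`, the bead
at the slot of residue `p` to the slot of residue `q`. -/
def slotMoves (S : Finset (Fin r)) (s : Fin r) : Finset ℤ :=
  if s ∈ S then Finset.Ioc (slot B p) (slot B q) else ∅

lemma sum_sumBelow_slotMoves {T : Fin r → Set ℤ} {S : Finset (Fin r)} {H : ℤ} (hH : 0 ≤ H)
    (hT : ∀ s, IsFlush B (T s)) (hpq : slot B p ≤ slot B q)
    (hS : ∀ s ∈ S, slot B p ∈ T s ∧ slot B q ∉ T s) (s : Fin r) :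
    ∑ z ∈ Finset.Ioc (slot B p) (slot B q),
        sumBelow e H s z (fun s' => moveWeight (T s') (slotMoves B p q S s')) =
      ∑ s', if s < s' ∧ s' ∉ S then ind (slot B p ∈ T s') - ind (slot B q ∈ T s') else 0 := by
  simp only [sumBelow]
  rw [Finset.sum_comm]
  refine Finset.sum_congr rfl fun s' _ => ?_
  rw [Finset.sum_comm]
  simp only [Finset.sum_ite_irrel, Finset.sum_const_zero]
  by_cases hs' : s' ∈ S
  · simp [slotMoves, hs', sum_moveWeight_Ioc (hT s') hpq (hS s' hs').1 (hS s' hs').2]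
  · simp only [slotMoves, hs', if_false, Finset.coe_empty, sum_moveWeight_empty (hT s') hpq,
      not_false_eq_true, and_true]
    rw [Finset.sum_eq_single_of_mem 0 (Finset.mem_Icc.2 ⟨by omega, hH⟩) fun t _ ht => by simp [ht]]
    simp

end Static

/-! ### Sliding beads residue by residue -/

section Chain

variable {e r : ℕ} {key : ZMod e → ℤ} {T : Set ℤ} {W : Finset ℤ} {J : List (ZMod e)} {j : ZMod e}
  {H : ℤ}

/-- Conditions under which the beads of `T` can be moved onto the positions in `W` one residue class
at a time, in the order of increasing `key`: whenever two adjacent positions are involved, the one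
that has to be vacated resp. filled first has the smaller key. Outside `W` they ensure that the
neighbours of a position are still unchanged when its residue is processed. -/
structure SlideOrder (key : ZMod e → ℤ) (T : Set ℤ) (W : Finset ℤ) : Prop where
  consecutive : ∀ z ∈ W, z + 1 ∈ W →
    (z ∈ T ∧ key (z + 1) < key z) ∨ (z ∉ T ∧ key z < key (z + 1))
  first : ∀ z ∉ W, z + 1 ∈ W → z ∈ T ∧ key z < key (z + 1)
  last : ∀ z ∈ W, z + 1 ∉ W → z ∉ T ∧ key (z + 1) < key z

/-- The positions in `W` whose residue lies in `J`. -/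
def ofResidues (W : Finset ℤ) (J : List (ZMod e)) : Finset ℤ := W.filter fun z => (z : ZMod e) ∈ J

lemma mem_ofResidues {z : ℤ} : z ∈ ofResidues W J ↔ z ∈ W ∧ (z : ZMod e) ∈ J := Finset.mem_filter

lemma ofResidues_append {J' : List (ZMod e)} :
    ofResidues W (J ++ J') = ofResidues W J ∪ ofResidues W J' := by
  ext z
  simp [mem_ofResidues, and_or_left]

lemma disjoint_ofResidues {J' : List (ZMod e)} (hJ : J.Disjoint J') :
    Disjoint (ofResidues W J) (ofResidues W J') :=
  Finset.disjoint_filter.2 fun _ _ hz hz' => hJ hz hz'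

namespace SlideOrder

variable (h : SlideOrder key T W) (hle : ∀ x ∈ J, key x ≤ key j) {z : ℤ}
  (hzj : (z : ZMod e) = j)

include h hle hzj

lemma mem_slide_iff_of_notMem (hz : z ∉ W) : z ∈ slide T (ofResidues W J) ↔ z ∈ T := by
  have hsucc : z + 1 ∉ ofResidues W J := fun hmem => by
    obtain ⟨hW, hJ⟩ := mem_ofResidues.1 hmem
    have := hle _ hJ
    have := (h.first z hz hW).2
    push_cast [hzj] at *
    omega
  simp [mem_slide, mem_ofResidues, hz, hsucc, xor_def]

lemma sub_one_mem_slide_iff_of_notMem (hz : z ∉ W) :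
    z - 1 ∈ slide T (ofResidues W J) ↔ z - 1 ∈ T := by
  have hpred : z - 1 ∉ ofResidues W J := fun hmem => by
    obtain ⟨hW, hJ⟩ := mem_ofResidues.1 hmem
    have := hle _ hJ
    have := (h.last (z - 1) hW (by rwa [sub_add_cancel])).2
    push_cast [hzj, sub_add_cancel] at *
    omega
  simp [mem_slide, mem_ofResidues, hz, hpred, xor_def]

lemma moveWeight_slide :
    moveWeight (slide T (ofResidues W J)) (ofResidues W [j]) z = moveWeight T W z := by
  by_cases hz : z ∈ W
  · simp [moveWeight, mem_ofResidues, hz, hzj]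
  · simp [moveWeight, mem_ofResidues, hz, h.mem_slide_iff_of_notMem hle hzj hz,
      h.sub_one_mem_slide_iff_of_notMem hle hzj hz]

variable (hj : j ∉ J) (hlt : ∀ z ∈ W, key z < key j → (z : ZMod e) ∈ J) (hz : z ∈ W)

include hj hlt hz

lemma notMem_slide : z ∉ slide T (ofResidues W J) := by
  have hzJ : z ∉ ofResidues W J := fun hmem => hj (hzj ▸ (mem_ofResidues.1 hmem).2)
  have hsucc : z + 1 ∈ ofResidues W J ↔ z ∈ T := by
    rw [mem_ofResidues]
    push_cast
    by_cases hW : z + 1 ∈ W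
    · have hlt' := hlt _ hW
      have hc := h.consecutive z hz hW
      have hle' := hle (z + 1)
      push_cast [hzj] at *
      rcases hc with ⟨hT, hk⟩ | ⟨hT, hk⟩
      · exact iff_of_true ⟨hW, hlt' hk⟩ hT
      · exact iff_of_false (fun hJ => (hle' hJ.2).not_gt hk) hT
    · exact iff_of_false (fun hmem => hW hmem.1) (h.last z hz hW).1
  simp [mem_slide, hzJ, hsucc, xor_def]

lemma sub_one_mem_slide : z - 1 ∈ slide T (ofResidues W J) := by
  have hzJ : z ∉ ofResidues W J := fun hmem => hj (hzj ▸ (mem_ofResidues.1 hmem).2)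
  have hpred : z - 1 ∈ ofResidues W J ↔ z - 1 ∉ T := by
    rw [mem_ofResidues]
    push_cast
    by_cases hW : z - 1 ∈ W
    · have hlt' := hlt _ hW
      have hc := h.consecutive (z - 1) hW (by rwa [sub_add_cancel])
      have hle' := hle (z - 1)
      push_cast [hzj, sub_add_cancel] at *
      rcases hc with ⟨hT, hk⟩ | ⟨hT, hk⟩
      · exact iff_of_false (fun hJ => (hle' (hzj ▸ hJ.2)).not_gt (hzj ▸ hk)) (not_not.2 hT)
      · exact iff_of_true ⟨hW, hzj ▸ hlt' (hzj ▸ hk)⟩ hT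
    · exact iff_of_false (fun hmem => hW hmem.1)
        (not_not.2 (h.first (z - 1) hW (by rwa [sub_add_cancel])).1)
  simp [mem_slide, hzJ, hpred, xor_def, em]

end SlideOrder

lemma Confined.slide (hT : Confined H T) {A : Set ℤ} (hA : A ⊆ Set.Ioo 0 H) :
    Confined H (slide T A) := by
  have hsame (z : ℤ) (hz : z ∉ Set.Ico 0 H) : z ∈ AK.slide T A ↔ z ∈ T := by
    have h₀ : z ∉ A := fun h => hz (Set.Ioo_subset_Ico_self (hA h))
    have h₁ : z + 1 ∉ A := fun h =>
      hz ⟨Int.lt_add_one_iff.1 (hA h).1, (lt_add_one z).trans (hA h).2⟩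
    simp [mem_slide, h₀, h₁, xor_def]
  refine ⟨fun z hz => (hsame z fun h => h.1.not_gt hz).2 (hT.1 hz), fun z hz => ?_⟩
  by_contra hzH
  exact hzH (hT.2 ((hsame z fun h => hzH h.2).1 hz))

section Path

variable {n : Fin r → ℤ} {σ : MP r} {W : Fin r → Finset ℤ} (hσ : IsMPart σ)
  (hH : ∀ s, Confined H (betaSet (n s) (σ s))) (hW : ∀ s, (W s : Set ℤ) ⊆ Set.Ioo 0 H)
  (hkey : ∀ s, SlideOrder key (betaSet (n s) (σ s)) (W s))

include hσ hH hW hkey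

lemma AddPath.exists_snoc_slide [Nontrivial (ZMod e)] [NeZero e] {μ : MP r}
    {ops : List (ZMod e × ℕ)} {d : ℤ} (hpath : AddPath (fun s => (n s : ZMod e)) σ ops μ d)
    (hμ : ∀ s, betaSet (n s) (μ s) = slide (betaSet (n s) (σ s)) (ofResidues (W s) J))
    (hle : ∀ x ∈ J, key x ≤ key j) (hj : j ∉ J)
    (hlt : ∀ s, ∀ z ∈ W s, key z < key j → (z : ZMod e) ∈ J) :
    ∃ lam : MP r,
      (∀ s, betaSet (n s) (lam s) = slide (betaSet (n s) (σ s)) (ofResidues (W s) (J ++ [j]))) ∧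
      AddPath (fun s => (n s : ZMod e)) σ (ops ++ [(j, ∑ s, (ofResidues (W s) [j]).card)]) lam
        (d + ∑ s, ∑ z ∈ ofResidues (W s) [j],
          sumBelow e H s z fun s' => moveWeight (betaSet (n s') (σ s')) (W s')) := by
  have hpart := hpath.isMPart hσ
  have hres : ∀ s, ∀ z ∈ ofResidues (W s) [j], (z : ZMod e) = j := fun s z hz =>
    List.mem_singleton.1 (mem_ofResidues.1 hz).2
  have hlegal : ∀ s, ∀ z ∈ ofResidues (W s) [j],
      z - 1 ∈ betaSet (n s) (μ s) ∧ z ∉ betaSet (n s) (μ s) := fun s z hz => by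
    have hzW := (mem_ofResidues.1 hz).1
    rw [hμ]
    exact ⟨(hkey s).sub_one_mem_slide hle (hres s z hz) hj (hlt s) hzW,
      (hkey s).notMem_slide hle (hres s z hz) hj (hlt s) hzW⟩
  have hslide : ∀ s, betaSet (n s) (addNodesAt n μ (fun s => ofResidues (W s) [j]) s) =
      slide (betaSet (n s) (σ s)) (ofResidues (W s) (J ++ [j])) := fun s => by
    have hdisj : J.Disjoint [j] := List.disjoint_singleton.2 hj
    rw [addNodesAt, betaSet_addNodes (hlegal s), hμ, slide_slide, ofResidues_append,
      Finset.coe_union, (Finset.disjoint_coe.2 (disjoint_ofResidues hdisj)).symmDiff_eq_sup]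
    rfl
  have hconf (l : List (ZMod e)) (s) :
      Confined H (slide (betaSet (n s) (σ s)) (ofResidues (W s) l)) :=
    (hH s).slide fun z hz => hW s (mem_ofResidues.1 hz).1
  refine ⟨_, hslide, ?_⟩
  have hnext := hpath.snoc (q := (j, ∑ s, (ofResidues (W s) [j]).card))
    (addK_addNodesAt hpart hlegal hres)
  rw [NvalF_addNodesAt hpart hlegal hres (fun s => hμ s ▸ hconf _ s)
    (fun s => hslide s ▸ hconf _ s)] at hnext
  convert hnext using 1
  refine congrArg (d + ·) (Finset.sum_congr rfl fun s _ => Finset.sum_congr rfl fun z hz =>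
    sumBelow_congr fun s' y hy => ?_)
  rw [hμ]
  exact ((hkey s').moveWeight_slide hle (hy.trans (hres s z hz))).symm

lemma exists_addPath_slide [Nontrivial (ZMod e)] [NeZero e] (l : List (ZMod e)) (hnd : l.Nodup)
    (hsort : l.Pairwise fun x y => key x ≤ key y)
    (hdown : ∀ s, ∀ z ∈ W s, ∀ x ∈ l, key z < key x → (z : ZMod e) ∈ l) :
    ∃ lam : MP r, (∀ s, betaSet (n s) (lam s) = slide (betaSet (n s) (σ s)) (ofResidues (W s) l)) ∧
      AddPath (fun s => (n s : ZMod e)) σ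
        (l.map fun j => (j, ∑ s, (ofResidues (W s) [j]).card)) lam
        (∑ s, ∑ z ∈ ofResidues (W s) l,
          sumBelow e H s z fun s' => moveWeight (betaSet (n s') (σ s')) (W s')) := by
  induction l using List.reverseRecOn with
  | nil => exact ⟨σ, fun s => by simp [ofResidues, slide_empty], by simpa [ofResidues] using .nil⟩
  | append_singleton J j ih =>
    obtain ⟨hndJ, -, hdisj⟩ := List.nodup_append'.1 hnd
    obtain ⟨hsortJ, -, hle⟩ := List.pairwise_append.1 hsort
    simp only [List.mem_singleton, forall_eq] at hle
    have hlt : ∀ s, ∀ z ∈ W s, key z < key j → (z : ZMod e) ∈ J := fun s z hz hk => by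
      have := hdown s z hz j (by simp) hk
      simp only [List.mem_append, List.mem_singleton] at this
      exact this.resolve_right fun h => hk.ne (by rw [h])
    obtain ⟨μ, hμ, hpath⟩ := ih hndJ hsortJ fun s z hz x hx hk =>
      hlt s z hz (hk.trans_le (hle x hx))
    obtain ⟨lam, hlam, hnext⟩ := hpath.exists_snoc_slide hσ hH hW hkey hμ hle
      (List.disjoint_singleton.1 hdisj) hlt
    refine ⟨lam, hlam, ?_⟩
    simpa [ofResidues_append, Finset.sum_union (disjoint_ofResidues hdisj),
      Finset.sum_add_distrib] using hnext

end Path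

end Chain

/-! ### The order in which the residues are treated -/

section Order

variable {e r : ℕ} [NeZero e] {B : Fin e → ℕ} {p q : ZMod e}

lemma exists_forall_add_one_sub_eq {w : ZMod e → ℤ} (hw : ∑ j, w j = 0) :
    ∃ key : ZMod e → ℤ, ∀ j, key (j + 1) - key j = w j := by
  let key (j : ZMod e) : ℤ := ∑ t ∈ Finset.range j.val, w t
  have hkey : ∀ m ≤ e, key m = ∑ t ∈ Finset.range m, w t := fun m hm => by
    rcases hm.lt_or_eq with hm | rfl
    · simp only [key, ZMod.val_cast_of_lt hm]
    · have hbij : ∑ t ∈ Finset.range m, w t = ∑ j, w j :=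
        Finset.sum_nbij' (fun t => (t : ZMod m)) ZMod.val (by simp)
          (fun j _ => Finset.mem_range.2 j.val_lt)
          (fun t ht => ZMod.val_cast_of_lt (Finset.mem_range.1 ht)) (by simp) (by simp)
      simp [key, hbij, hw]
  refine ⟨key, fun j => ?_⟩
  have h := hkey (j.val + 1) j.val_lt
  rw [Finset.sum_range_succ] at h
  push_cast [ZMod.natCast_zmod_val] at h
  rw [h]
  simp [key]

lemma exists_key_lt_iff {E : Finset (ZMod e)} (hE : E.Nonempty) (hE' : Eᶜ.Nonempty) :
    ∃ key : ZMod e → ℤ,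
      (∀ j ∈ E, key j < key (j + 1)) ∧ ∀ j ∉ E, key (j + 1) < key j := by
  have hw : ∑ j, (if j ∈ E then (Eᶜ.card : ℤ) else -E.card) = 0 := by
    rw [← Finset.sum_add_sum_compl E, Finset.sum_congr rfl fun j hj => if_pos hj,
      Finset.sum_congr (s₁ := Eᶜ) rfl fun j hj => if_neg (Finset.mem_compl.1 hj)]
    simp only [Finset.sum_const, nsmul_eq_mul]
    ring
  obtain ⟨key, hkey⟩ := exists_forall_add_one_sub_eq hw
  have hpos := hE.card_pos
  have hpos' := hE'.card_pos
  refine ⟨key, fun j hj => ?_, fun j hj => ?_⟩ <;>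
  · have := hkey j
    simp only [hj, if_true, if_false] at this
    omega

lemma IsFlush.slideOrder {T : Set ℤ} {key : ZMod e → ℤ} (hT : IsFlush B T) (hp : slot B p ∈ T)
    (hq : slot B q ∉ T) (hsep : ∀ j, slot B j ≤ slot B p ∨ slot B q ≤ slot B j)
    (hup : ∀ j, slot B j ≤ slot B p → key j < key (j + 1))
    (hdown : ∀ j, slot B q ≤ slot B j → key (j + 1) < key j) :
    SlideOrder key T (Finset.Ioc (slot B p) (slot B q)) where
  consecutive z hz hz' := by
    rw [Finset.mem_Ioc] at hz hz'
    rcases hsep z with h | h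
    · exact .inr ⟨(hT z).2 (by omega), hup _ h⟩
    · exact .inl ⟨(hT z).1 (by omega), hdown _ h⟩
  first z hz hz' := by
    rw [Finset.mem_Ioc] at hz hz'
    obtain rfl : z = slot B p := by omega
    exact ⟨hp, hup _ (by rw [slot_cast])⟩
  last z hz hz' := by
    rw [Finset.mem_Ioc] at hz hz'
    obtain rfl : z = slot B q := by omega
    exact ⟨hq, hdown _ (by rw [slot_cast])⟩

lemma exists_nodup_pairwise_le {α : Type*} (key : α → ℤ) (A : Finset α) :
    ∃ l : List α, l.Nodup ∧ (∀ x, x ∈ l ↔ x ∈ A) ∧ l.Pairwise fun x y => key x ≤ key y := by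
  have : Std.Total fun x y : α => key x ≤ key y := ⟨fun x y => le_total _ _⟩
  have : IsTrans α fun x y : α => key x ≤ key y := ⟨fun x y z => le_trans⟩
  have hperm := List.perm_insertionSort (fun x y => key x ≤ key y) A.toList
  exact ⟨_, hperm.nodup_iff.2 A.nodup_toList, fun x => by rw [hperm.mem_iff, Finset.mem_toList],
    List.pairwise_insertionSort _ _⟩

lemma exists_residues_slideOrder (hpq : slot B p < slot B q)
    (hsep : ∀ j, slot B j ≤ slot B p ∨ slot B q ≤ slot B j) :
    ∃ (key : ZMod e → ℤ) (l : List (ZMod e)), l.Nodup ∧ (l.Pairwise fun x y => key x ≤ key y) ∧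
      (∀ j, j ∈ l ↔ ∃ z ∈ Finset.Ioc (slot B p) (slot B q), (z : ZMod e) = j) ∧
      ∀ T, IsFlush B T → slot B p ∈ T → slot B q ∉ T →
        SlideOrder key T (Finset.Ioc (slot B p) (slot B q)) := by
  obtain ⟨key, hup, hdown⟩ := exists_key_lt_iff (E := {j | slot B j ≤ slot B p})
    ⟨p, by simp⟩ ⟨q, by simpa using hpq⟩
  obtain ⟨l, hnd, hl, hsort⟩ :=
    exists_nodup_pairwise_le key
      ((Finset.Ioc (slot B p) (slot B q)).image fun z : ℤ => (z : ZMod e))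
  refine ⟨key, l, hnd, hsort, by simpa using hl, fun T hT hp hq => hT.slideOrder hp hq hsep
    (fun j hj => hup j (by simpa using hj)) fun j hj => hdown j ?_⟩
  simpa using hpq.trans_le hj

end Order

section SlotMoves

variable {e r : ℕ} [NeZero e] {B : Fin e → ℕ} {p q : ZMod e} {key : ZMod e → ℤ}
  {l : List (ZMod e)} {n : Fin r → ℤ} {σ : MP r} {S : Finset (Fin r)} {H : ℤ}

lemma IsFlush.confined {T : Set ℤ} (hT : IsFlush B T) (hH : ∀ j, slot B j < H) :
    Confined H T := by
  refine ⟨fun z hz => (hT z).1 (hz.trans_le (slot_nonneg B _)), fun z hz => ?_⟩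
  exact (not_lt.1 fun h => (hT z).2 h hz).trans_lt (hH _)

lemma sum_slotMoves (g : Fin r → ℤ → ℤ) :
    ∑ s, ∑ z ∈ slotMoves B p q S s, g s z =
      ∑ s ∈ S, ∑ z ∈ Finset.Ioc (slot B p) (slot B q), g s z := by
  rw [← Finset.sum_subset S.subset_univ fun s _ hs => by simp [slotMoves, hs]]
  exact Finset.sum_congr rfl fun s hs => by rw [slotMoves, if_pos hs]

variable (B p q) in
/-- The divided powers that move, in `k` components, the bead at the slot of residue `p` to the slot
of residue `q`, when the residues are treated in the order given by `l`. -/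
def slotOps (k : ℕ) (l : List (ZMod e)) : List (ZMod e × ℕ) :=
  l.map fun j => (j, k * (ofResidues (Finset.Ioc (slot B p) (slot B q)) [j]).card)

lemma exists_addPath_slotMoves [Nontrivial (ZMod e)] (hσ : IsMPart σ)
    (hflush : ∀ s, IsFlush B (betaSet (n s) (σ s)))
    (hpq : slot B p < slot B q) (hnd : l.Nodup) (hsort : l.Pairwise fun x y => key x ≤ key y)
    (hl : ∀ z ∈ Finset.Ioc (slot B p) (slot B q), (z : ZMod e) ∈ l)
    (hkey : ∀ T, IsFlush B T → slot B p ∈ T → slot B q ∉ T →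
      SlideOrder key T (Finset.Ioc (slot B p) (slot B q)))
    (hS : ∀ s ∈ S, slot B p ∈ betaSet (n s) (σ s) ∧ slot B q ∉ betaSet (n s) (σ s)) :
    ∃ lam : MP r,
      (∀ s, betaSet (n s) (lam s) = slide (betaSet (n s) (σ s)) (slotMoves B p q S s)) ∧
      AddPath (fun s => (n s : ZMod e)) σ (slotOps B p q S.card l) lam
        (∑ s ∈ S, ∑ s', if s < s' ∧ s' ∉ S then
            ind (slot B p ∈ betaSet (n s') (σ s')) - ind (slot B q ∈ betaSet (n s') (σ s'))
          else 0) := by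
  obtain ⟨H, hH⟩ := exists_forall_slot_lt B
  have hall (s) : ofResidues (slotMoves B p q S s) l = slotMoves B p q S s := by
    refine Finset.filter_true_of_mem fun z hz => hl z ?_
    by_cases hs : s ∈ S <;> simp_all [slotMoves]
  have hcard (j : ZMod e) : ∑ s, (ofResidues (slotMoves B p q S s) [j]).card =
      S.card * (ofResidues (Finset.Ioc (slot B p) (slot B q)) [j]).card := by
    simp [slotMoves, ofResidues, apply_ite]
  have hW (s) : (slotMoves B p q S s : Set ℤ) ⊆ Set.Ioo 0 H := fun z hz => by
    have hp := slot_nonneg B p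
    have hq := hH q
    by_cases hs : s ∈ S <;> simp [slotMoves, hs] at hz
    exact ⟨by omega, by omega⟩
  have horder (s) : SlideOrder key (betaSet (n s) (σ s)) (slotMoves B p q S s) := by
    by_cases hs : s ∈ S
    · simpa [slotMoves, hs] using hkey _ (hflush s) (hS s hs).1 (hS s hs).2
    · simp only [slotMoves, hs, if_false]
      constructor <;> simp
  obtain ⟨lam, hlam, hpath⟩ := exists_addPath_slide hσ (fun s => (hflush s).confined hH) hW horder
    l hnd hsort fun s z hz _ _ _ => (mem_ofResidues.1 ((hall s).symm ▸ hz)).2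
  refine ⟨lam, fun s => by rw [hlam, hall], ?_⟩
  have hH₀ : 0 ≤ H := (slot_nonneg B p).trans (hH p).le
  simp only [hall, hcard, sum_slotMoves, sum_sumBelow_slotMoves hH₀ hflush hpq.le hS] at hpath
  exact hpath

end SlotMoves

/-! ### Weighted bead sums -/

section WeightedSums

variable {e r : ℕ} {n : Fin r → ℤ} {σ μ lam : MP r} {j : ZMod e} {k N : ℕ}
  {ops : List (ZMod e × ℕ)} {d : ℤ} {g : ℤ → ℤ} {h : ZMod e → ℤ}

lemma sum_betaSeq_sub_betaSeq (hle : ∀ s x, σ s x ≤ lam s x) (hN : ∀ s x, N ≤ x → lam s x = 0)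
    (hg : ∀ z : ℤ, g z - g (z - 1) = h z) :
    ∑ s, ∑ x ∈ Finset.range N, (g (betaSeq (n s) (lam s) x) - g (betaSeq (n s) (σ s) x)) =
      ∑ᶠ A ∈ {A : Node r | diagMem lam A ∧ ¬diagMem σ A}, h (res (fun s => (n s : ZMod e)) A) := by
  have himage : {A : Node r | diagMem lam A ∧ ¬diagMem σ A} =
      (fun p : (_ : Fin r) × (_ : ℕ) × ℕ => (p.1, p.2.1, p.2.2)) ''
        (Finset.univ.sigma fun s => (Finset.range N).sigma fun x =>
          Finset.Ico (σ s x) (lam s x) : Finset _) := by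
    ext ⟨s, x, y⟩
    constructor
    · rintro ⟨hlam, hσ⟩
      have hx : x < N := by
        by_contra! hx
        simp [diagMem, hN s x hx] at hlam
      exact ⟨⟨s, x, y⟩, by simpa [hx] using ⟨not_lt.1 hσ, hlam⟩, rfl⟩
    · rintro ⟨⟨s, x, y⟩, hp, ⟨⟩⟩
      simp only [Finset.mem_coe, Finset.mem_sigma, Finset.mem_Ico] at hp
      exact ⟨hp.2.2.2, hp.2.2.1.not_gt⟩
  rw [himage, finsum_mem_image fun p _ p' _ hp => ?_, finsum_mem_coe_finset, Finset.sum_sigma]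
  · refine Finset.sum_congr rfl fun s _ => ?_
    rw [Finset.sum_sigma]
    refine Finset.sum_congr rfl fun x _ => ?_
    rw [betaSeq, betaSeq, ← Finset.sum_Ico_sub (fun y : ℕ => g (y + n s - x - 1)) (hle s x)]
    refine Finset.sum_congr rfl fun y _ => ?_
    rw [res_eq_nodePos, ← hg]
    congr 2 <;> push_cast [nodePos] <;> ring
  · obtain ⟨s, x, y⟩ := p
    simp only [Prod.mk.injEq] at hp
    simp [hp]

lemma finsum_mem_const {α M : Type*} [AddCommMonoid M] (S : Set α) (c : M) :
    ∑ᶠ _i ∈ S, c = S.ncard • c := by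
  rcases S.finite_or_infinite with hS | hS
  · rw [finsum_mem_eq_finite_toFinset_sum _ hS, Finset.sum_const, Set.ncard_eq_toFinset_card S hS]
  · rcases eq_or_ne c 0 with rfl | hc
    · simp
    · rw [hS.ncard, zero_smul, finsum_mem_eq_zero_of_infinite]
      rwa [Function.support_const hc, Set.inter_univ]

lemma AddK.sum_betaSeq_sub (hA : AddK (fun s => (n s : ZMod e)) j k σ lam)
    (hN : ∀ s x, N ≤ x → lam s x = 0) (hg : ∀ z : ℤ, g z - g (z - 1) = h z) :
    ∑ s, ∑ x ∈ Finset.range N, (g (betaSeq (n s) (lam s) x) - g (betaSeq (n s) (σ s) x)) =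
      k * h j := by
  rw [sum_betaSeq_sub_betaSeq hA.2.1 hN hg,
    finsum_mem_congr rfl fun A hA' => congrArg h (hA.2.2.2 A hA'.1 hA'.2),
    finsum_mem_const, hA.2.2.1, nsmul_eq_mul]

lemma AddPath.le (hpath : AddPath (fun s => (n s : ZMod e)) σ ops lam d) (s : Fin r) (x : ℕ) :
    σ s x ≤ lam s x :=
  le_of_forall_lt fun y hy => hpath.diagMem_mono (A := (s, x, y)) hy

lemma AddPath.sum_betaSeq_sub (hpath : AddPath (fun s => (n s : ZMod e)) σ ops lam d)
    (hN : ∀ s x, N ≤ x → lam s x = 0) (hg : ∀ z : ℤ, g z - g (z - 1) = h z) :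
    ∑ s, ∑ x ∈ Finset.range N, (g (betaSeq (n s) (lam s) x) - g (betaSeq (n s) (σ s) x)) =
      (ops.map fun q => q.2 * h q.1).sum := by
  induction hpath with
  | nil => simp
  | @snoc ops μ lam _ q _ hq ih =>
    have hμ (s x) (hx : N ≤ x) : μ s x = 0 := Nat.eq_zero_of_le_zero (hN s x hx ▸ hq.2.1 s x)
    rw [List.map_append, List.sum_append, ← ih hμ, List.map_singleton, List.sum_singleton,
      ← hq.sum_betaSeq_sub hN hg]
    simp only [← Finset.sum_add_distrib, sub_add_sub_cancel']

/-- The change of the total weight of the beads, for the weight function `g`, when the bead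
configuration `U` is replaced by `V`. -/
def weightChange (U V : Set ℤ) (g : ℤ → ℤ) : ℤ := ∑ᶠ z, (ind (z ∈ V) - ind (z ∈ U)) * g z

lemma weightChange_eq_sum {U V : Set ℤ} {W : Finset ℤ} (hW : symmDiff U V ⊆ W) (g : ℤ → ℤ) :
    weightChange U V g = ∑ z ∈ W, (ind (z ∈ V) - ind (z ∈ U)) * g z := by
  refine finsum_eq_sum_of_support_subset _ fun z hz => hW ?_
  contrapose! hz
  have hUV : z ∈ U ↔ z ∈ V := by
    rw [Set.mem_symmDiff] at hz
    tauto
  simp [hUV]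

section BetaSets

variable {n H : ℤ} {f f' : ℕ → ℕ} (hf : IsPartFun f) (hf' : IsPartFun f')
  (hN : ∀ x, N ≤ x → f x = 0) (hN' : ∀ x, N ≤ x → f' x = 0)
  (hH : ∀ z ∈ betaSet n f, z < H) (hH' : ∀ z ∈ betaSet n f', z < H)

include hN in
lemma mem_betaSet_of_lt {z : ℤ} (hz : z < n - N) : z ∈ betaSet n f :=
  ⟨(n - z - 1).toNat, by rw [betaSeq, hN _ (by omega)]; omega⟩

include hN hN' hH hH' in
lemma symmDiff_betaSet_subset_Ico :
    symmDiff (betaSet n f) (betaSet n f') ⊆ Finset.Ico (n - N) H := by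
  intro z hz
  rw [Finset.coe_Ico, Set.mem_Ico, ← not_lt]
  rcases hz with ⟨hz, hz'⟩ | ⟨hz, hz'⟩
  · exact ⟨fun h => hz' (mem_betaSet_of_lt hN' h), hH z hz⟩
  · exact ⟨fun h => hz' (mem_betaSet_of_lt hN h), hH' z hz⟩

include hf hN hH in
lemma sum_betaSeq_eq_sum_Ico (g : ℤ → ℤ) :
    ∑ x ∈ Finset.range N, g (betaSeq n f x) =
      ∑ z ∈ Finset.Ico (n - N) H, ind (z ∈ betaSet n f) * g z := by
  have himage : (Finset.Ico (n - N) H).filter (· ∈ betaSet n f) =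
      (Finset.range N).image (betaSeq n f) := by
    ext z
    simp only [Finset.mem_filter, Finset.mem_Ico, Finset.mem_image, Finset.mem_range]
    constructor
    · rintro ⟨⟨hz, -⟩, x, rfl⟩
      refine ⟨x, ?_, rfl⟩
      by_contra! hx
      simp only [betaSeq, hN x hx] at hz
      omega
    · rintro ⟨x, hx, rfl⟩
      refine ⟨⟨?_, hH _ (betaSeq_mem_betaSet x)⟩, betaSeq_mem_betaSet x⟩
      simp only [betaSeq]
      omega
  simp only [ind, ite_mul, one_mul, zero_mul]
  rw [← Finset.sum_filter, himage, Finset.sum_image (betaSeq_strictAnti hf).injective.injOn]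

include hf hf' in
lemma exists_forall_mem_betaSet_lt (n : ℤ) :
    ∃ H, (∀ z ∈ betaSet n f, z < H) ∧ ∀ z ∈ betaSet n f', z < H := by
  refine ⟨max (betaSeq n f 0) (betaSeq n f' 0) + 1, ?_, ?_⟩ <;> rintro _ ⟨x, rfl⟩
  · have := (betaSeq_strictAnti (n := n) hf).antitone x.zero_le
    omega
  · have := (betaSeq_strictAnti (n := n) hf').antitone x.zero_le
    omega

include hf hf' in
lemma IsPartFun.exists_eq_zero : ∃ N, (∀ x, N ≤ x → f x = 0) ∧ ∀ x, N ≤ x → f' x = 0 := by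
  obtain ⟨N, hN⟩ := hf.2
  obtain ⟨N', hN'⟩ := hf'.2
  exact ⟨max N N', fun x hx => hN x (by omega), fun x hx => hN' x (by omega)⟩

include hf hf' in
lemma finite_symmDiff_betaSet (n : ℤ) : (symmDiff (betaSet n f) (betaSet n f')).Finite := by
  obtain ⟨N, hN, hN'⟩ := hf.exists_eq_zero hf'
  obtain ⟨H, hH, hH'⟩ := exists_forall_mem_betaSet_lt hf hf' n
  exact (Finset.finite_toSet _).subset (symmDiff_betaSet_subset_Ico hN hN' hH hH')

include hf hf' hN hN' in
lemma sum_betaSeq_sub_eq_weightChange (g : ℤ → ℤ) :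
    ∑ x ∈ Finset.range N, (g (betaSeq n f' x) - g (betaSeq n f x)) =
      weightChange (betaSet n f) (betaSet n f') g := by
  obtain ⟨H, hH, hH'⟩ := exists_forall_mem_betaSet_lt hf hf' n
  rw [weightChange_eq_sum (symmDiff_betaSet_subset_Ico hN hN' hH hH'), Finset.sum_sub_distrib,
    sum_betaSeq_eq_sum_Ico hf' hN' hH', sum_betaSeq_eq_sum_Ico hf hN hH, ← Finset.sum_sub_distrib]
  simp only [sub_mul]

include hf hf' in
lemma weightChange_nonneg {g : ℤ → ℤ} (hg : Monotone g) (hle : ∀ x, f x ≤ f' x) :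
    0 ≤ weightChange (betaSet n f) (betaSet n f') g := by
  obtain ⟨N, hN, hN'⟩ := hf.exists_eq_zero hf'
  rw [← sum_betaSeq_sub_eq_weightChange hf hf' hN hN']
  refine Finset.sum_nonneg fun x _ => sub_nonneg.2 (hg ?_)
  have := hle x
  simp only [betaSeq]
  omega

end BetaSets

lemma AddPath.sum_weightChange (hσ : IsMPart σ)
    (hpath : AddPath (fun s => (n s : ZMod e)) σ ops lam d)
    (hg : ∀ z : ℤ, g z - g (z - 1) = h z) :
    ∑ s, weightChange (betaSet (n s) (σ s)) (betaSet (n s) (lam s)) g =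
      (ops.map fun q => q.2 * h q.1).sum := by
  obtain ⟨N, hN⟩ := (hpath.isMPart hσ).exists_eq_zero
  have hNσ (s x) (hx : N ≤ x) : σ s x = 0 := Nat.eq_zero_of_le_zero (hN s x hx ▸ hpath.le s x)
  rw [← hpath.sum_betaSeq_sub hN hg]
  exact Finset.sum_congr rfl fun s _ =>
    (sum_betaSeq_sub_eq_weightChange (hσ s) (hpath.isMPart hσ s) (hNσ s) (hN s) g).symm

end WeightedSums

/-! ### The endpoints of the divided powers -/

section Matrices

variable {e r : ℕ} {i : Fin e} {k : ℕ} {L M : Fin r → Fin e → Bool} {s : Fin r}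

/-- The number of ones of row `s` of `M` in the columns from `c` on. -/
def tailSum (M : Fin r → Fin e → Bool) (s : Fin r) (c : ℕ) : ℤ :=
  ∑ j : Fin e, ind (c ≤ j) * ind (M s j = true)

lemma ind_eq_tailSum_sub (c : Fin e) :
    ind (M s c = true) = tailSum M s c - tailSum M s (c + 1) := by
  rw [tailSum, tailSum, ← Finset.sum_sub_distrib, Finset.sum_eq_single c]
  · simp [ind]
  · intro j _ hj
    have : (c : ℕ) ≤ j ↔ (c + 1 : ℕ) ≤ j := by
      rw [← Fin.val_ne_iff] at hj
      omega
    simp [this]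
  · simp

lemma colPred_add_one (hi : i.1 ≠ 0) : (colPred i : ℕ) + 1 = i :=
  Nat.sub_add_cancel (Nat.one_le_iff_ne_zero.2 hi)

lemma gArrow_of_ind_sub_ind (hi : i.1 ≠ 0) {δ : Fin r → ℤ} (hδ : ∀ s, 0 ≤ δ s)
    (hsum : ∑ s, δ s = k) (h : ∀ s c, ind (M s c = true) - ind (L s c = true) =
      δ s * (ind (c = i) - ind (c = colPred i))) : GArrow i k L M := by
  have hne : colPred i ≠ i := fun h => by
    have := colPred_add_one hi
    rw [h] at this
    omega
  have hcases (s) : (δ s = 0 ∧ ∀ c, M s c = L s c) ∨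
      (δ s = 1 ∧ L s i = false ∧ L s (colPred i) = true ∧
        ∀ c, M s c = if c = colPred i ∨ c = i then !(L s c) else L s c) := by
    have hδ₀ := hδ s
    have hcol := h s i
    have hrow (c) := h s c
    rw [ind, ind, ind, ind, if_pos rfl, if_neg hne.symm] at hcol
    obtain h₀ | h₁ : δ s = 0 ∨ δ s = 1 := by split_ifs at hcol <;> omega
    · refine .inl ⟨h₀, fun c => ?_⟩
      specialize hrow c
      revert hrow
      cases M s c <;> cases L s c <;> simp [ind, h₀]
    · have hrow' (c : Fin e) : (c = i → L s c = false) ∧ (c = colPred i → L s c = true) ∧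
          M s c = if c = colPred i ∨ c = i then !(L s c) else L s c := by
        specialize hrow c
        revert hrow
        by_cases hc : c = i <;> by_cases hc' : c = colPred i <;> cases M s c <;> cases L s c <;>
          simp_all [ind]
      exact .inr ⟨h₁, (hrow' i).1 rfl, (hrow' _).2.1 rfl, fun c => (hrow' c).2.2⟩
  refine ⟨Finset.univ.filter fun s => δ s = 1, ?_, fun s hs => ?_, ?_⟩
  · rw [← @Nat.cast_inj ℤ, ← hsum, Finset.natCast_card_filter]
    refine Finset.sum_congr rfl fun s _ => ?_
    rcases hcases s with ⟨h, -⟩ | ⟨h, -⟩ <;> simp [h]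
  · rcases hcases s with ⟨h, -⟩ | ⟨-, hL, hL', -⟩
    · simp [h] at hs
    · exact ⟨hL', hL⟩
  · funext s c
    rcases hcases s with ⟨hs, h⟩ | ⟨hs, -, -, h⟩ <;> simp [h, hs]

lemma gArrow_of_tailSum (hi : i.1 ≠ 0) (hle : ∀ s c, tailSum L s c ≤ tailSum M s c)
    (htot : ∀ c : ℕ, ∑ s, (tailSum M s c - tailSum L s c) = if c = i then (k : ℤ) else 0) :
    GArrow i k L M := by
  have hzero (s) (c : ℕ) (hc : c ≠ i) : tailSum M s c - tailSum L s c = 0 :=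
    (Finset.sum_eq_zero_iff_of_nonneg fun s _ => sub_nonneg.2 (hle s c)).1
      ((htot c).trans (if_neg hc)) s (Finset.mem_univ s)
  have hind (s) (c : ℕ) : tailSum M s c - tailSum L s c =
      (tailSum M s i - tailSum L s i) * ind (c = i) := by
    by_cases hc : c = i
    · simp [ind, hc]
    · simp [ind, hc, hzero]
  refine gArrow_of_ind_sub_ind hi (fun s => sub_nonneg.2 (hle s i))
    ((htot i).trans (if_pos rfl)) fun s c => ?_
  have hc : (c : ℕ) = i ↔ c = i := Fin.val_inj
  have hc' : (c + 1 : ℕ) = i ↔ c = colPred i := by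
    rw [← Fin.val_inj, ← colPred_add_one hi, add_left_inj]
  rw [ind_eq_tailSum_sub, ind_eq_tailSum_sub, sub_sub_sub_comm, hind s c, hind s (c + 1), hc, hc',
    mul_sub]

end Matrices

section Endpoints

variable {e r : ℕ} [NeZero e] {B : Fin e → ℕ} {p q : ZMod e} {l : List (ZMod e)} {U V : Set ℤ}
  {n : Fin r → ℤ} {σ lam : MP r} {k : ℕ} {d : ℤ} {L M : Fin r → Fin e → Bool} {s : Fin r}
  {i : Fin e}

variable (B) in
/-- The signed distance of a position above the slot of its runner. -/
def excess (z : ℤ) : ℤ := z - slot B (z : ZMod e)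

lemma IsFlush.mul_excess_nonneg (hU : IsFlush B U) (V : Set ℤ) (z : ℤ) :
    0 ≤ (ind (z ∈ V) - ind (z ∈ U)) * excess B z := by
  rw [excess]
  rcases lt_trichotomy z (slot B (z : ZMod e)) with hz | hz | hz
  · have hzU := (hU z).1 hz
    refine mul_nonneg_of_nonpos_of_nonpos ?_ (sub_nonpos.2 hz.le)
    simp only [ind, hzU, if_true]
    split_ifs <;> simp
  · rw [sub_eq_zero.2 hz, mul_zero]
  · have hzU := (hU z).2 hz
    refine mul_nonneg ?_ (sub_nonneg.2 hz.le)
    simp only [ind, hzU, if_false]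
    split_ifs <;> simp

lemma IsFlush.of_weightChange_excess_eq_zero (hU : IsFlush B U) (hfin : (symmDiff U V).Finite)
    (h : weightChange U V (excess B) = 0) : IsFlush B V := by
  rw [weightChange_eq_sum (W := hfin.toFinset) (by simp),
    Finset.sum_eq_zero_iff_of_nonneg fun z _ => hU.mul_excess_nonneg V z] at h
  have hsame (z : ℤ) (hz : excess B z ≠ 0) : z ∈ V ↔ z ∈ U := by
    by_contra hne
    have hmem : z ∈ symmDiff U V := by
      rw [Set.mem_symmDiff]
      tauto
    have hind := (mul_eq_zero.1 (h z (hfin.mem_toFinset.2 hmem))).resolve_right hz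
    by_cases hzV : z ∈ V <;> by_cases hzU : z ∈ U <;> simp_all [ind]
  exact fun z => ⟨fun hz => (hsame z (sub_neg.2 hz).ne).2 ((hU z).1 hz),
    fun hz => mt (hsame z (sub_pos.2 hz).ne').1 ((hU z).2 hz)⟩

lemma IsFlush.of_sum_weightChange_excess_eq_zero {U V : Fin r → Set ℤ}
    (hU : ∀ s, IsFlush B (U s)) (hfin : ∀ s, (symmDiff (U s) (V s)).Finite)
    (h : ∑ s, weightChange (U s) (V s) (excess B) = 0) (s : Fin r) : IsFlush B (V s) :=
  (hU s).of_weightChange_excess_eq_zero (hfin s) <|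
    (Finset.sum_eq_zero_iff_of_nonneg fun s _ =>
      finsum_nonneg ((hU s).mul_excess_nonneg (V s))).1 h s (Finset.mem_univ s)

lemma exists_forall_eq_Tset {U : Fin r → Set ℤ} (hU : ∀ s, IsFlush B (U s)) :
    ∃ M : Fin r → Fin e → Bool, ∀ s, U s = Tset B M s := by
  obtain ⟨inv, hinv, -⟩ := Function.bijective_iff_has_inverse.1 (column_bijective B)
  exact ⟨fun s c => decide (slot B (inv c) ∈ U s), fun s => (hU s).eq_Tset fun j => by
    rw [hinv, decide_eq_true_iff]⟩

lemma weightChange_Tset (g : ℤ → ℤ) : weightChange (Tset B L s) (Tset B M s) g =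
    ∑ j, (ind (M s (column B j) = true) - ind (L s (column B j) = true)) * g (slot B j) := by
  rw [weightChange_eq_sum (W := Finset.univ.image (slot B)),
    Finset.sum_image (slot_injective B).injOn]
  · simp only [slot_mem_Tset]
  · intro z hz
    rcases lt_trichotomy z (slot B (z : ZMod e)) with h | h | h
    · rcases hz with hz | hz <;> exact absurd ((isFlush_Tset z).1 h) hz.2
    · exact Finset.mem_coe.2 (Finset.mem_image.2 ⟨z, Finset.mem_univ _, h.symm⟩)
    · rcases hz with hz | hz <;> exact absurd hz.1 ((isFlush_Tset z).2 h)

lemma weightChange_Tset_eq_tailSum {g : ℤ → ℤ} {c : ℕ}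
    (hg : ∀ j, g (slot B j) = ind (c ≤ column B j)) :
    weightChange (Tset B L s) (Tset B M s) g = tailSum M s c - tailSum L s c := by
  rw [weightChange_Tset, tailSum, tailSum, ← Finset.sum_sub_distrib,
    ← (column_bijective B).sum_comp fun c' : Fin e =>
      ind (c ≤ c') * ind (M s c' = true) - ind (c ≤ c') * ind (L s c' = true)]
  refine Finset.sum_congr rfl fun j _ => ?_
  rw [hg]
  ring

lemma sum_slotOps {g : ℤ → ℤ} {h : ZMod e → ℤ} (hpq : slot B p ≤ slot B q) (hnd : l.Nodup)
    (hl : ∀ z ∈ Finset.Ioc (slot B p) (slot B q), (z : ZMod e) ∈ l)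
    (hg : ∀ z : ℤ, g z - g (z - 1) = h z) :
    ((slotOps B p q k l).map fun q => q.2 * h q.1).sum = k * (g (slot B q) - g (slot B p)) := by
  rw [slotOps, List.map_map, ← List.sum_toFinset _ hnd, ← neg_sub (g (slot B p)),
    ← sum_Ioc_sub hpq, ← Finset.sum_neg_distrib,
    ← Finset.sum_fiberwise_of_maps_to (t := l.toFinset) (g := fun z : ℤ => (z : ZMod e))
      fun z hz => List.mem_toFinset.2 (hl z hz), Finset.mul_sum]
  refine Finset.sum_congr rfl fun j _ => ?_
  have hfiber : ofResidues (Finset.Ioc (slot B p) (slot B q)) [j] =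
      (Finset.Ioc (slot B p) (slot B q)).filter fun z : ℤ => (z : ZMod e) = j := by
    simp [ofResidues]
  rw [Function.comp_apply, hfiber, Nat.cast_mul, mul_assoc,
    Finset.sum_congr rfl fun z hz => show -(g (z - 1) - g z) = h j by
      rw [neg_sub, hg, (Finset.mem_filter.1 hz).2], Finset.sum_const, nsmul_eq_mul]

lemma tailSum_le_tailSum {m : ℤ} {f f' : ℕ → ℕ} (hf : IsPartFun f) (hf' : IsPartFun f')
    (hle : ∀ x, f x ≤ f' x) (hL : betaSet m f = Tset B L s) (hM : betaSet m f' = Tset B M s)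
    (c : ℕ) : tailSum L s c ≤ tailSum M s c := by
  rcases lt_or_ge c e with hc | hc
  · obtain ⟨j₀, hj₀⟩ := (column_bijective B).2 ⟨c, hc⟩
    have hval : (column B j₀ : ℕ) = c := congrArg Fin.val hj₀
    rw [← sub_nonneg, ← weightChange_Tset_eq_tailSum (g := fun z => ind (slot B j₀ ≤ z))
      fun j => by rw [← column_le_column_iff, Fin.le_def, hval], ← hL, ← hM]
    refine weightChange_nonneg hf hf' (fun z z' hz => ?_) hle
    simp only [ind]
    split_ifs <;> omega
  · have hzero (c' : Fin e) : ind (c ≤ c') = 0 := if_neg (c'.2.trans_le hc).not_ge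
    simp [tailSum, hzero]

lemma exists_eq_PtPart_of_addPath (hi : i.1 ≠ 0) (hp : column B p = colPred i)
    (hq : column B q = i) (hnd : l.Nodup)
    (hl : ∀ z ∈ Finset.Ioc (slot B p) (slot B q), (z : ZMod e) ∈ l)
    (hpath : AddPath (fun s => ((nsum B L s : ℤ) : ZMod e)) (PtPart B L) (slotOps B p q k l)
      lam d) :
    ∃ M, GArrow i k L M ∧ lam = PtPart B M := by
  have hσ : IsMPart (PtPart B L) := isPartFun_PtPart B L
  have hlam : IsMPart lam := hpath.isMPart hσ
  have hpq : slot B p ≤ slot B q := by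
    rw [← column_le_column_iff, hp, hq, Fin.le_def]
    exact Nat.sub_le _ _
  have htot (g : ℤ → ℤ) (h : ZMod e → ℤ) (hg : ∀ z : ℤ, g z - g (z - 1) = h z) :=
    (hpath.sum_weightChange hσ hg).trans (sum_slotOps hpq hnd hl hg)
  have hflush := IsFlush.of_sum_weightChange_excess_eq_zero
    (fun s => (betaSet_PtPart B L s).symm ▸ isFlush_Tset)
    (fun s => finite_symmDiff_betaSet (hσ s) (hlam s) (nsum B L s))
    ((htot _ (fun j => 1 - slot B j + slot B (j - 1)) fun z => by
      rw [excess, excess]; push_cast; ring).trans (by simp [excess, slot_cast]))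
  obtain ⟨M, hM⟩ := exists_forall_eq_Tset hflush
  refine ⟨M, gArrow_of_tailSum hi (fun s => tailSum_le_tailSum (hσ s) (hlam s) (hpath.le s)
    (betaSet_PtPart B L s) (hM s)) fun c => ?_,
    funext fun s => (eq_PtPart_of_betaSet_eq_Tset (hlam s) (hM s)).2⟩
  have hcast (j : ZMod e) : ind (c ≤ column B ((slot B j : ℤ) : ZMod e)) =
      ind (c ≤ column B j) := by rw [slot_cast]
  have hterm (s) :
      weightChange (Tset B L s) (Tset B M s) (fun z => ind (c ≤ column B (z : ZMod e))) =
        tailSum M s c - tailSum L s c := weightChange_Tset_eq_tailSum hcast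
  have htot_c := htot (fun z => ind (c ≤ column B (z : ZMod e)))
    (fun j => ind (c ≤ column B j) - ind (c ≤ column B (j - 1))) fun z => by push_cast; ring
  simp only [betaSet_PtPart, hM, hterm, hcast, hp, hq] at htot_c
  rw [htot_c, ← colPred_add_one hi]
  simp only [ind]
  split_ifs <;> omega

end Endpoints

/-! ### Matrix induction -/

section MatrixInduction

variable {e r : ℕ} {B : Fin e → ℕ} {p q : ZMod e} {l : List (ZMod e)} {key : ZMod e → ℤ} {k : ℕ}
  {L M : Fin r → Fin e → Bool} {S : Finset (Fin r)} {s : Fin r} {i : Fin e}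

/-- The matrix obtained from `L` by moving the ones in the rows of `S` from column `i - 1` to
column `i`, written as a swap of zeros and ones as in `GArrow`. -/
def moveOnes (i : Fin e) (S : Finset (Fin r)) (L : Fin r → Fin e → Bool) : Fin r → Fin e → Bool :=
  fun s c => if s ∈ S ∧ (c = colPred i ∨ c = i) then !(L s c) else L s c

lemma Nval_moveOnes (hS : ∀ s ∈ S, L s (colPred i) = true ∧ L s i = false) :
    Nval i L (moveOnes i S L) = ∑ s ∈ S, ∑ s', if s < s' ∧ s' ∉ S then
      ind (L s' (colPred i) = true) - ind (L s' i = true) else 0 := by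
  have hrows : Finset.univ.filter (fun a => ¬L a i = moveOnes i S L a i) = S := by
    ext a
    by_cases ha : a ∈ S <;> simp [moveOnes, ha]
  rw [Nval, hrows]
  refine Finset.sum_congr rfl fun s _ => ?_
  rw [Finset.natCast_card_filter, Finset.natCast_card_filter, ← Finset.sum_sub_distrib]
  refine Finset.sum_congr rfl fun s' _ => ?_
  by_cases hs' : s' ∈ S
  · simp [moveOnes, hs', hS s' hs']
  · by_cases hlt : s < s' <;> cases hc : L s' (colPred i) <;> cases hc' : L s' i <;>
      simp [moveOnes, hs', hlt, hc, hc', ind]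

lemma exists_adjacent_slots [NeZero e] (B : Fin e → ℕ) (hi : i.1 ≠ 0) :
    ∃ p q, column B p = colPred i ∧ column B q = i ∧ slot B p < slot B q ∧
      ∀ j, slot B j ≤ slot B p ∨ slot B q ≤ slot B j := by
  obtain ⟨p, hp⟩ := (column_bijective B).2 (colPred i)
  obtain ⟨q, hq⟩ := (column_bijective B).2 i
  have hpred := colPred_add_one hi
  refine ⟨p, q, hp, hq, ?_, fun j => ?_⟩
  · rw [← column_lt_column_iff, hp, hq, Fin.lt_def]
    omega
  · rw [← column_le_column_iff, ← column_le_column_iff, hp, hq, Fin.le_def, Fin.le_def]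
    omega

lemma IsFlush.symmDiff_slots [NeZero e] {U : Set ℤ} (hU : IsFlush B U) :
    IsFlush B (symmDiff U {slot B p, slot B q}) := by
  have hslot {z : ℤ} (hz : z ≠ slot B (z : ZMod e)) : z ∉ ({slot B p, slot B q} : Set ℤ) := by
    rintro (rfl | rfl) <;> simp [slot_cast] at hz
  refine fun z => ⟨fun hz => .inl ⟨(hU z).1 hz, hslot hz.ne⟩, fun hz => ?_⟩
  rintro (h | h)
  · exact (hU z).2 hz h.1
  · exact hslot hz.ne' h.1

lemma Tset_moveOnes [NeZero e] (hp : column B p = colPred i) (hq : column B q = i)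
    (hpq : slot B p < slot B q) :
    Tset B (moveOnes i S L) s = slide (Tset B L s) (slotMoves B p q S s) := by
  symm
  by_cases hs : s ∈ S
  · rw [slotMoves, if_pos hs, Finset.coe_Ioc, slide_Ioc _ hpq]
    refine isFlush_Tset.symmDiff_slots.eq_Tset fun j => ?_
    have hmem : slot B j ∈ ({slot B p, slot B q} : Set ℤ) ↔
        column B j = colPred i ∨ column B j = i := by
      rw [← hp, ← hq, (column_bijective B).1.eq_iff, (column_bijective B).1.eq_iff,
        Set.mem_insert_iff, Set.mem_singleton_iff, (slot_injective B).eq_iff,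
        (slot_injective B).eq_iff]
    rw [Set.mem_symmDiff, hmem, slot_mem_Tset, moveOnes]
    by_cases hj : column B j = colPred i ∨ column B j = i <;> simp [hs, hj]
  · simp only [slotMoves, hs, if_false, Finset.coe_empty, slide_empty]
    exact isFlush_Tset.eq_Tset fun j => by simp [slot_mem_Tset, moveOnes, hs]

lemma GArrow.nsum_eq_and_addPath [NeZero e] [Nontrivial (ZMod e)] (h : GArrow i k L M)
    (hp : column B p = colPred i) (hq : column B q = i) (hpq : slot B p < slot B q)
    (hnd : l.Nodup) (hsort : l.Pairwise fun x y => key x ≤ key y)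
    (hl : ∀ z ∈ Finset.Ioc (slot B p) (slot B q), (z : ZMod e) ∈ l)
    (hkey : ∀ T, IsFlush B T → slot B p ∈ T → slot B q ∉ T →
      SlideOrder key T (Finset.Ioc (slot B p) (slot B q))) :
    (∀ s, nsum B M s = nsum B L s) ∧
      AddPath (fun s => ((nsum B L s : ℤ) : ZMod e)) (PtPart B L) (slotOps B p q k l)
        (PtPart B M) (Nval i L M) := by
  obtain ⟨S, rfl, hS, rfl⟩ := h
  obtain ⟨lam, hlam, hpath⟩ := exists_addPath_slotMoves (S := S) (n := fun s => nsum B L s)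
    (isPartFun_PtPart B L) (fun s => (betaSet_PtPart B L s).symm ▸ isFlush_Tset) hpq hnd hsort hl
    hkey fun s hs => by simp [betaSet_PtPart, slot_mem_Tset, hp, hq, hS s hs]
  have heq (s) := eq_PtPart_of_betaSet_eq_Tset (hpath.isMPart (isPartFun_PtPart B L) s)
    ((hlam s).trans (by rw [betaSet_PtPart, ← Tset_moveOnes hp hq hpq]))
  obtain rfl : lam = PtPart B (moveOnes i S L) := funext fun s => (heq s).2
  simp only [betaSet_PtPart, slot_mem_Tset, hp, hq, ← Nval_moveOnes hS] at hpath
  exact ⟨fun s => (Nat.cast_injective (heq s).1).symm, hpath⟩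

lemma eq_of_PtPart_eq [NeZero e] (hn : ∀ s, nsum B M s = nsum B L s)
    (h : PtPart B M = PtPart B L) : M = L := by
  funext s c
  obtain ⟨j, rfl⟩ := (column_bijective B).2 c
  rw [Bool.eq_iff_iff, ← slot_mem_Tset, ← slot_mem_Tset, ← betaSet_PtPart, ← betaSet_PtPart, hn, h]

lemma eq_sum_single_of_injOn {α ι R : Type*} [AddCommMonoid R] {f : α →₀ R} {t : Finset ι}
    {g : ι → α} (hg : Set.InjOn g t) (hf : ∀ x ∈ f.support, ∃ j ∈ t, g j = x) :
    f = ∑ j ∈ t, Finsupp.single (g j) (f (g j)) := by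
  rw [← Finset.sum_image (f := fun x => Finsupp.single x (f x)) hg]
  conv_lhs => rw [← f.sum_single]
  exact Finsupp.sum_of_support_subset f (fun x hx => Finset.mem_image.2 (hf x hx)) _ (by simp)

lemma FopList_slotOps [NeZero e] [Nontrivial (ZMod e)] (hi : i.1 ≠ 0)
    (hp : column B p = colPred i) (hq : column B q = i) (hpq : slot B p < slot B q)
    (hnd : l.Nodup) (hsort : l.Pairwise fun x y => key x ≤ key y)
    (hl : ∀ z ∈ Finset.Ioc (slot B p) (slot B q), (z : ZMod e) ∈ l)
    (hkey : ∀ T, IsFlush B T → slot B p ∈ T → slot B q ∉ T →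
      SlideOrder key T (Finset.Ioc (slot B p) (slot B q))) :
    FopList (PtCharge B L) (slotOps B p q k l) (Finsupp.single (PtPart B L) 1) =
      ∑ M ∈ Finset.univ.filter (fun M => GArrow i k L M),
        Finsupp.single (PtPart B M) (LaurentPolynomial.T (Nval i L M)) := by
  have hcharge : PtCharge B L = fun s => ((nsum B L s : ℤ) : ZMod e) := by
    funext s
    rw [PtCharge, Int.cast_natCast]
  have harrow {M} (hM : GArrow i k L M) := hM.nsum_eq_and_addPath hp hq hpq hnd hsort hl hkey
  have hσ : IsMPart (PtPart B L) := isPartFun_PtPart B L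
  have hops : ((slotOps B p q k l).map Prod.fst).Nodup := by
    simpa [slotOps, Function.comp_def] using hnd
  rw [hcharge]
  refine (eq_sum_single_of_injOn (g := PtPart B)
    (t := Finset.univ.filter fun M => GArrow i k L M) ?_ ?_).trans
    (Finset.sum_congr rfl fun M hM => ?_)
  · intro M hM M' hM' heq
    have hn := (harrow (Finset.mem_filter.1 hM).2).1
    have hn' := (harrow (Finset.mem_filter.1 hM').2).1
    exact eq_of_PtPart_eq (fun s => (hn s).trans (hn' s).symm) heq
  · intro lam hlam
    obtain ⟨d, hpath⟩ := exists_addPath_of_mem_support hσ hlam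
    obtain ⟨M, hM, rfl⟩ := exists_eq_PtPart_of_addPath hi hp hq hnd hl hpath
    exact ⟨M, by simpa using hM, rfl⟩
  · rw [(harrow (Finset.mem_filter.1 hM).2).2.FopList_apply hσ hops]

lemma snd_pos_of_mem_slotOps [NeZero e] (hk : 0 < k)
    (hl : ∀ j ∈ l, ∃ z ∈ Finset.Ioc (slot B p) (slot B q), (z : ZMod e) = j)
    {x : ZMod e × ℕ} (hx : x ∈ slotOps B p q k l) : 0 < x.2 := by
  obtain ⟨j, hj, rfl⟩ := List.mem_map.1 hx
  obtain ⟨z, hz, rfl⟩ := hl j hj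
  exact Nat.mul_pos hk (Finset.card_pos.2 ⟨z, mem_ofResidues.2 ⟨hz, List.mem_singleton_self _⟩⟩)

end MatrixInduction

/-- A matrix induction step `G^{(k)}_i` can be realised by a
sequence of divided powers of Chevalley generators on multipartitions. -/
theorem matrix_induction_realised (e r : ℕ) (he : 2 ≤ e) (hr : 1 ≤ r)
    (B : Fin e → ℕ) (hB : ∃ i, B i = 0)
    (L : Fin r → Fin e → Bool) (i : Fin e) (hi : i.1 ≠ 0) (k : ℕ) (hk : 0 < k) :
    ∃ ops : List (ZMod e × ℕ), (∀ q ∈ ops, 0 < q.2) ∧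
      FopList (PtCharge B L) ops (Finsupp.single (PtPart B L) 1) =
        ∑ M ∈ Finset.univ.filter
            (fun M : Fin r → Fin e → Bool => GArrow i k L M),
          Finsupp.single (PtPart B M) (LaurentPolynomial.T (Nval i L M)) := by
  have : NeZero e := ⟨by omega⟩
  have : Nontrivial (ZMod e) := ZMod.nontrivial_iff.2 (by omega)
  obtain ⟨p, q, hp, hq, hpq, hsep⟩ := exists_adjacent_slots B hi
  obtain ⟨key, l, hnd, hsort, hl, hkey⟩ := exists_residues_slideOrder hpq hsep
  exact ⟨slotOps B p q k l, fun x hx => snd_pos_of_mem_slotOps hk (fun j hj => (hl j).1 hj) hx,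
    FopList_slotOps hi hp hq hpq hnd hsort (fun z hz => (hl z).2 ⟨z, hz, rfl⟩) hkey⟩

end

end AK
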